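/- Let A be a basic indecomposable artin algebra and let X and Y be modules in ind A. Then X and Y belong to the same connected component of the cyclic quiver _cΓ_A if and only if there is an oriented cycle in the Auslander–Reiten quiver Γ_A passing through both X and Y. -/

import Mathlib

/-!
Common framework: finite length modules over a ring, the radical of the module
category, cycles of indecomposable modules, Auslander-Reiten quivers,
translation quivers notions, and classes of artin algebras.
Right `A`-modules are formalized as left `Aᵐᵒᵖ`-modules.
-/

universe u

/-- A bundled object of `mod R`: a finite length `R`-module. -/
structure ModA (R : Type u) [Ring R] : Type (u + 1) where
  M : Type u
  [acg : AddCommGroup M]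
  [mod : Module R M]
  finLen : IsFiniteLength R M

attribute [instance] ModA.acg ModA.mod

/-- A bundled (not necessarily finite length) `R`-module. -/
structure RawMod (R : Type u) [Ring R] : Type (u + 1) where
  M : Type u
  [acg : AddCommGroup M]
  [mod : Module R M]

attribute [instance] RawMod.acg RawMod.mod

/-- A module is indecomposable iff it is nonzero and its endomorphism ring has no
nontrivial idempotents. -/
def IsIndecMod (R : Type u) [Ring R] (M : Type u) [AddCommGroup M] [Module R M] : Prop :=
  Nontrivial M ∧ ∀ f : Module.End R M, f * f = f → f = 0 ∨ f = 1

namespace ModA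

variable {R : Type u} [Ring R]

/-- Indecomposability of an object of `mod R`. -/
def IsIndec (X : ModA R) : Prop := IsIndecMod R X.M

/-- Isomorphism of objects of `mod R`. -/
def Iso (X Y : ModA R) : Prop := Nonempty (X.M ≃ₗ[R] Y.M)

end ModA

/-- Membership in the radical `rad(X, Y)` of the category `mod R`: a map `f : X → Y`
belongs to the radical iff for every indecomposable `Z` and all `g : Z → X`, `h : Y → Z`
the composite `h ∘ f ∘ g` is not an isomorphism. -/
def InRad {R : Type u} [Ring R] {X Y : ModA R} (f : X.M →ₗ[R] Y.M) : Prop :=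
  ∀ Z : ModA R, Z.IsIndec → ∀ (g : Z.M →ₗ[R] X.M) (h : Y.M →ₗ[R] Z.M),
    ¬Function.Bijective (h.comp (f.comp g))

/-- The powers `rad^n` of the radical of `mod R`. -/
def radPow (R : Type u) [Ring R] : ℕ → ∀ X Y : ModA R, AddSubgroup (X.M →ₗ[R] Y.M)
  | 0, _, _ => ⊤
  | n + 1, X, Y => AddSubgroup.closure
      {f | ∃ (Z : ModA R) (g : X.M →ₗ[R] Z.M) (h : Z.M →ₗ[R] Y.M),
        InRad g ∧ h ∈ radPow R n Z Y ∧ f = h.comp g}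

/-- Membership in the infinite radical `rad^∞ = ⋂ₙ radⁿ` of `mod R`. -/
def InRadInf {R : Type u} [Ring R] {X Y : ModA R} (f : X.M →ₗ[R] Y.M) : Prop :=
  ∀ n : ℕ, f ∈ radPow R n X Y

/-- A cycle in `ind R`: a sequence of nonzero nonisomorphisms
`M₀ → M₁ → ⋯ → M_{r-1} → M_r = M₀` between indecomposable modules. -/
structure ModCycle (R : Type u) [Ring R] : Type (u + 1) where
  len : ℕ
  len_pos : 0 < len
  obj : Fin (len + 1) → ModA R
  obj_indec : ∀ i, (obj i).IsIndec
  closed : obj (Fin.last len) = obj 0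
  hom : ∀ i : Fin len, (obj i.castSucc).M →ₗ[R] (obj i.succ).M
  hom_ne_zero : ∀ i, hom i ≠ 0
  hom_not_iso : ∀ i, ¬Function.Bijective (hom i)

/-- A cycle is finite if none of its homomorphisms lies in the infinite radical. -/
def ModCycle.IsFiniteCycle {R : Type u} [Ring R] (c : ModCycle R) : Prop :=
  ∀ i, ¬InRadInf (c.hom i)

/-- The cycle passes through the module `M`. -/
def ModCycle.Passes {R : Type u} [Ring R] (c : ModCycle R) (M : ModA R) : Prop :=
  ∃ i, (c.obj i).Iso M

/-- A module is cycle-finite if it lies on a cycle and every cycle through it is finite. -/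
def IsCycleFiniteModule {R : Type u} [Ring R] (M : ModA R) : Prop :=
  (∃ c : ModCycle R, c.Passes M) ∧ ∀ c : ModCycle R, c.Passes M → c.IsFiniteCycle

/-- A module is directing if it lies on no cycle. -/
def IsDirectingModule {R : Type u} [Ring R] (M : ModA R) : Prop :=
  ¬∃ c : ModCycle R, c.Passes M

section Irreducible

variable {R : Type u} [Ring R]

/-- `f` is a split monomorphism (a section). -/
def SplitMonoMap {X Y : ModA R} (f : X.M →ₗ[R] Y.M) : Prop :=
  ∃ r : Y.M →ₗ[R] X.M, r.comp f = LinearMap.id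

/-- `f` is a split epimorphism (a retraction). -/
def SplitEpiMap {X Y : ModA R} (f : X.M →ₗ[R] Y.M) : Prop :=
  ∃ s : Y.M →ₗ[R] X.M, f.comp s = LinearMap.id

/-- `f` is an irreducible homomorphism. -/
def IsIrred {X Y : ModA R} (f : X.M →ₗ[R] Y.M) : Prop :=
  ¬SplitMonoMap f ∧ ¬SplitEpiMap f ∧
    ∀ (Z : ModA R) (g : X.M →ₗ[R] Z.M) (h : Z.M →ₗ[R] Y.M), h.comp g = f →
      SplitMonoMap g ∨ SplitEpiMap h

end Irreducible

/-- An almost split (Auslander-Reiten) sequence `0 → l → m → r → 0` in `mod R`. -/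
structure AlmostSplitSeq (R : Type u) [Ring R] : Type (u + 1) where
  l : ModA R
  m : ModA R
  r : ModA R
  f : l.M →ₗ[R] m.M
  g : m.M →ₗ[R] r.M
  inj : Function.Injective f
  surj : Function.Surjective g
  exact : LinearMap.range f = LinearMap.ker g
  not_split : ¬SplitEpiMap g
  l_indec : l.IsIndec
  r_indec : r.IsIndec
  right_almost : ∀ (Z : ModA R) (h : Z.M →ₗ[R] r.M), ¬SplitEpiMap h →
      ∃ h' : Z.M →ₗ[R] m.M, g.comp h' = h
  left_almost : ∀ (Z : ModA R) (h : l.M →ₗ[R] Z.M), ¬SplitMonoMap h →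
      ∃ h' : m.M →ₗ[R] Z.M, h'.comp f = h

/-- `N ≅ τ M` for the Auslander-Reiten translation `τ = DTr`. -/
def IsTauOf {R : Type u} [Ring R] (N M : ModA R) : Prop :=
  ∃ s : AlmostSplitSeq R, s.l.Iso N ∧ s.r.Iso M

/-- The indecomposable objects of `mod R`. -/
def IndecModA (R : Type u) [Ring R] := {X : ModA R // X.IsIndec}

/-- Isomorphism is an equivalence relation on indecomposable modules. -/
def isoSetoid (R : Type u) [Ring R] : Setoid (IndecModA R) where
  r X Y := X.1.Iso Y.1
  iseqv :=
    { refl := fun X => ⟨LinearEquiv.refl R X.1.M⟩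
      symm := fun h => h.elim fun e => ⟨e.symm⟩
      trans := fun h h' => h.elim fun e => h'.elim fun e' => ⟨e.trans e'⟩ }

/-- The vertices of the Auslander-Reiten quiver `Γ_R`: isomorphism classes of
indecomposable modules in `mod R`. -/
def ARVertex (R : Type u) [Ring R] := Quotient (isoSetoid R)

/-- The vertex of `Γ_R` given by an indecomposable module. -/
def ARVertex.mk {R : Type u} [Ring R] (X : IndecModA R) : ARVertex R :=
  Quotient.mk (isoSetoid R) X

section ARQuiver

variable {R : Type u} [Ring R]

/-- The arrows of the Auslander-Reiten quiver: `x → y` iff there is an irreducible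
homomorphism between representatives. -/
def ARArrow (x y : ARVertex R) : Prop :=
  ∃ (X Y : IndecModA R) (f : X.1.M →ₗ[R] Y.1.M),
    IsIrred f ∧ ARVertex.mk X = x ∧ ARVertex.mk Y = y

/-- `TauRel x y` iff `x = τ y` in the Auslander-Reiten quiver. -/
def TauRel (x y : ARVertex R) : Prop :=
  ∃ X Y : IndecModA R, ARVertex.mk X = x ∧ ARVertex.mk Y = y ∧ IsTauOf X.1 Y.1

/-- A vertex given by an (indecomposable) projective module. -/
def IsProjVertex (x : ARVertex R) : Prop :=
  ∃ X : IndecModA R, ARVertex.mk X = x ∧ Module.Projective R X.1.M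

/-- A vertex given by an (indecomposable) injective module. -/
def IsInjVertex (x : ARVertex R) : Prop :=
  ∃ X : IndecModA R, ARVertex.mk X = x ∧ Module.Injective R X.1.M

/-- The vertex lies on an oriented cycle of `Γ_R`. -/
def OnARCycle (x : ARVertex R) : Prop := Relation.TransGen ARArrow x x

/-- An edge (arrow in either direction) of the underlying graph of `Γ_R`. -/
def ARStep (x y : ARVertex R) : Prop := ARArrow x y ∨ ARArrow y x

/-- `D` is a connected component of the full subquiver of `Γ_R` on the vertex set `S`. -/
def IsComponentOf (S D : Set (ARVertex R)) : Prop :=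
  D ⊆ S ∧ D.Nonempty ∧
    (∀ x ∈ D, ∀ y ∈ S, ARStep x y → y ∈ D) ∧
    ∀ x ∈ D, ∀ y ∈ D, Relation.ReflTransGen (fun a b => a ∈ S ∧ b ∈ S ∧ ARStep a b) x y

/-- `C` is a connected component of `Γ_R`. -/
def IsARComponent (C : Set (ARVertex R)) : Prop := IsComponentOf Set.univ C

/-- The vertex lies on an oriented cycle all of whose vertices belong to `S`. -/
def OnCycleIn (S : Set (ARVertex R)) (x : ARVertex R) : Prop :=
  Relation.TransGen (fun a b => a ∈ S ∧ b ∈ S ∧ ARArrow a b) x x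

/-- `Γ` is a connected component of the cyclic quiver `_cΓ_R` (a cyclic component). -/
def IsCyclicComponent (Γ : Set (ARVertex R)) : Prop :=
  IsComponentOf {x | OnARCycle x} Γ

/-- A vertex represented by a cycle-finite module. -/
def IsCycleFiniteVertex (x : ARVertex R) : Prop :=
  ∃ X : IndecModA R, ARVertex.mk X = x ∧ IsCycleFiniteModule X.1

/-- A vertex represented by a directing module. -/
def IsDirectingVertex (x : ARVertex R) : Prop :=
  ∃ X : IndecModA R, ARVertex.mk X = x ∧ IsDirectingModule X.1

/-- A cycle-finite cyclic component: a cyclic component containing a cycle-finite module. -/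
def IsCycleFiniteCyclicComponent (Γ : Set (ARVertex R)) : Prop :=
  IsCyclicComponent Γ ∧ ∃ x ∈ Γ, IsCycleFiniteVertex x

/-- A full translation subquiver is cyclic if each of its vertices lies on an oriented
cycle inside it. -/
def IsCyclicSub (S : Set (ARVertex R)) : Prop := ∀ x ∈ S, OnCycleIn S x

/-- A full translation subquiver is coherent: every projective vertex is the start of an
infinite sectional path inside it, and every injective vertex is the end of an infinite
sectional path inside it. -/
def IsCoherentSub (S : Set (ARVertex R)) : Prop :=
  (∀ x ∈ S, IsProjVertex x → ∃ c : ℕ → ARVertex R, c 0 = x ∧ (∀ n, c n ∈ S) ∧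
      (∀ n, ARArrow (c n) (c (n + 1))) ∧ ∀ n, ¬TauRel (c n) (c (n + 2))) ∧
  (∀ x ∈ S, IsInjVertex x → ∃ c : ℕ → ARVertex R, c 0 = x ∧ (∀ n, c n ∈ S) ∧
      (∀ n, ARArrow (c (n + 1)) (c n)) ∧ ∀ n, ¬TauRel (c (n + 2)) (c n))

/-- `S` is a convex subquiver of (the full subquiver on) `C`: every path in `C` with
source and target in `S` has all its vertices in `S`. -/
def ConvexIn (C S : Set (ARVertex R)) : Prop :=
  ∀ (n : ℕ) (c : ℕ → ARVertex R), (∀ k ≤ n, c k ∈ C) →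
    (∀ k < n, ARArrow (c k) (c (k + 1))) → c 0 ∈ S → c n ∈ S → ∀ k ≤ n, c k ∈ S

/-- `S` is the core of the almost acyclic component `C`: the finite convex subquiver of
`C` containing all vertices lying on oriented cycles in `C`. -/
def IsCoreOf (C S : Set (ARVertex R)) : Prop :=
  S ⊆ C ∧ S.Finite ∧ ConvexIn C S ∧ ∀ x ∈ C, OnCycleIn C x → x ∈ S

/-- A component is almost acyclic if all but finitely many of its vertices do not lie on
oriented cycles. -/
def IsAlmostAcyclicComp (C : Set (ARVertex R)) : Prop := {x ∈ C | OnCycleIn C x}.Finite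

/-- A component is almost cyclic if its cyclic part is cofinite. -/
def IsAlmostCyclicComp (C : Set (ARVertex R)) : Prop := {x ∈ C | ¬OnCycleIn C x}.Finite

/-- Two vertices lie in the same `τ`-orbit. -/
def TauConn (x y : ARVertex R) : Prop :=
  Relation.ReflTransGen (fun a b => TauRel a b ∨ TauRel b a) x y

/-- The left stable part of `C`: remove the `τ`-orbits of projective vertices. -/
def leftStable (C : Set (ARVertex R)) : Set (ARVertex R) :=
  {x | x ∈ C ∧ ¬∃ y, TauConn x y ∧ IsProjVertex y}

/-- The right stable part of `C`: remove the `τ`-orbits of injective vertices. -/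
def rightStable (C : Set (ARVertex R)) : Set (ARVertex R) :=
  {x | x ∈ C ∧ ¬∃ y, TauConn x y ∧ IsInjVertex y}

/-- The stable part of `C`. -/
def stablePart (C : Set (ARVertex R)) : Set (ARVertex R) := leftStable C ∩ rightStable C

end ARQuiver

/-- The arrows of the translation quiver `ℤA∞/(τ^r)`, with vertices indexed by the
`τ`-orbit coordinate in `ZMod r` and the quasi-length (minus one) in `ℕ`. -/
def TubeArrow {r : ℕ} : ZMod r × ℕ → ZMod r × ℕ → Prop := fun u v =>
  (v.1 = u.1 ∧ v.2 = u.2 + 1) ∨ (v.1 = u.1 + 1 ∧ u.2 = v.2 + 1)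

section Tube

variable {R : Type u} [Ring R]

/-- `T` is a stable tube of rank `r`, parametrized by `φ : ℤA∞/(τ^r) → Γ_R`. -/
def IsStableTubeVia (T : Set (ARVertex R)) (r : ℕ) (φ : ZMod r × ℕ → ARVertex R) : Prop :=
  0 < r ∧ Function.Injective φ ∧ Set.range φ = T ∧
    (∀ u v, TubeArrow u v → ARArrow (φ u) (φ v)) ∧
    (∀ u v, ARArrow (φ u) (φ v) → TubeArrow u v) ∧
    ∀ (i : ZMod r) (n : ℕ), TauRel (φ (i - 1, n)) (φ (i, n))

/-- `T` is a stable tube. -/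
def IsStableTube (T : Set (ARVertex R)) : Prop := ∃ r φ, IsStableTubeVia T r φ

end Tube

section Separating

variable {R : Type u} [Ring R]

/-- A family of vertices is generalized standard if `rad^∞` vanishes between its modules. -/
def GeneralizedStandardSet (U : Set (ARVertex R)) : Prop :=
  ∀ X Y : IndecModA R, ARVertex.mk X ∈ U → ARVertex.mk Y ∈ U →
    ∀ f : X.1.M →ₗ[R] Y.1.M, InRadInf f → f = 0

/-- `S` is (isomorphic to) a composition factor (a subquotient) of `M`. -/
def IsCompFactorMod (R : Type u) [Ring R] (S : Type u) [AddCommGroup S] [Module R S]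
    (M : Type u) [AddCommGroup M] [Module R M] : Prop :=
  ∃ N' N : Submodule R M, N' ≤ N ∧
    Nonempty ((↥N ⧸ N'.comap N.subtype) ≃ₗ[R] S)

/-- A family of vertices is sincere if every simple module is a composition factor of one
of its modules. -/
def SincereSet (U : Set (ARVertex R)) : Prop :=
  ∀ (S : Type u) [AddCommGroup S] [Module R S], IsSimpleModule R S →
    ∃ x ∈ U, ∃ X : IndecModA R, ARVertex.mk X = x ∧ IsCompFactorMod R S X.1.M

/-- All homomorphisms from modules with vertex in `U` to modules with vertex in `V` vanish. -/
def HomVanish (U V : Set (ARVertex R)) : Prop :=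
  ∀ X Y : IndecModA R, ARVertex.mk X ∈ U → ARVertex.mk Y ∈ V →
    ∀ f : X.1.M →ₗ[R] Y.1.M, f = 0

/-- Every homomorphism from a module in `U` to a module in `V` factors through the
additive closure of the modules in `W`. -/
def FactorsThrough (U W V : Set (ARVertex R)) : Prop :=
  ∀ X Y : IndecModA R, ARVertex.mk X ∈ U → ARVertex.mk Y ∈ V →
    ∀ f : X.1.M →ₗ[R] Y.1.M, ∃ (k : ℕ) (Z : Fin k → IndecModA R)
      (g : ∀ i, X.1.M →ₗ[R] (Z i).1.M) (h : ∀ i, (Z i).1.M →ₗ[R] Y.1.M),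
      (∀ i, ARVertex.mk (Z i) ∈ W) ∧ f = ∑ i, (h i).comp (g i)

/-- `cs` is a separating family of components of `Γ_R`. -/
def IsSeparatingFamily (cs : Set (Set (ARVertex R))) : Prop :=
  ∃ ps qs : Set (Set (ARVertex R)),
    (∀ C ∈ ps, IsARComponent C) ∧ (∀ C ∈ cs, IsARComponent C) ∧ (∀ C ∈ qs, IsARComponent C) ∧
    (∀ C, IsARComponent C → C ∈ ps ∨ C ∈ cs ∨ C ∈ qs) ∧
    (∀ C ∈ ps, C ∉ cs ∧ C ∉ qs) ∧ (∀ C ∈ cs, C ∉ qs) ∧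
    SincereSet (⋃₀ cs) ∧ GeneralizedStandardSet (⋃₀ cs) ∧
    HomVanish (⋃₀ qs) (⋃₀ ps) ∧ HomVanish (⋃₀ qs) (⋃₀ cs) ∧ HomVanish (⋃₀ cs) (⋃₀ ps) ∧
    FactorsThrough (⋃₀ ps) (⋃₀ cs) (⋃₀ qs)

end Separating

/-! ### Classes of algebras via their Auslander-Reiten quivers.
For a ring `B`, the category `mod B` of finitely generated right `B`-modules is
realized as the category of finite length left `Bᵐᵒᵖ`-modules. -/

/-- An algebra is of finite representation type if it has only finitely many isomorphism
classes of indecomposable finitely generated (right) modules. -/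
def IsFiniteRepTypeAlg (B : Type u) [Ring B] : Prop :=
  (Set.univ : Set (ARVertex Bᵐᵒᵖ)).Finite

/-- An algebra is cycle-finite if all cycles in `ind B` are finite. -/
def IsCycleFiniteAlg (B : Type u) [Ring B] : Prop :=
  ∀ c : ModCycle Bᵐᵒᵖ, c.IsFiniteCycle

/-- A generalized multicoil algebra: an algebra whose Auslander-Reiten quiver admits a
separating family of almost cyclic coherent components. -/
def IsGeneralizedMulticoilAlgebra (B : Type u) [Ring B] : Prop :=
  ∃ cs : Set (Set (ARVertex Bᵐᵒᵖ)),
    (∀ C ∈ cs, IsARComponent C ∧ IsAlmostCyclicComp C ∧ IsCoherentSub C) ∧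
    IsSeparatingFamily cs

/-- A generalized double tilted algebra: an algebra whose Auslander-Reiten quiver admits
a separating almost acyclic component (a connecting component). -/
def IsGeneralizedDoubleTiltedAlgebra (B : Type u) [Ring B] : Prop :=
  ∃ C : Set (ARVertex Bᵐᵒᵖ),
    IsARComponent C ∧ IsAlmostAcyclicComp C ∧ IsSeparatingFamily {C}

/-- A concealed canonical algebra: an algebra whose Auslander-Reiten quiver admits a
separating family of stable tubes. -/
def IsConcealedCanonicalAlgebra (B : Type u) [Ring B] : Prop :=
  ∃ ts : Set (Set (ARVertex Bᵐᵒᵖ)), (∀ T ∈ ts, IsStableTube T) ∧ IsSeparatingFamily ts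

/-- A generic module: an indecomposable module of infinite length with finite endolength. -/
def IsGenericModule (R : Type u) [Ring R] (N : RawMod R) : Prop :=
  IsIndecMod R N.M ∧ ¬IsFiniteLength R N.M ∧ IsFiniteLength (Module.End R N.M) N.M

/-- The endolength of a module: its length over its endomorphism ring. -/
noncomputable def endolength (R : Type u) [Ring R] (N : RawMod R) : WithBot ℕ∞ :=
  Order.krullDim (Submodule (Module.End R N.M) N.M)

/-- Generic tameness in the sense of Crawley-Boevey: for each `d` there are only finitely
many isomorphism classes of generic (right) modules of endolength `d`. -/
def IsGenericallyTameAlg (B : Type u) [Ring B] : Prop :=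
  ∀ d : ℕ, ∃ (k : ℕ) (T : Fin k → RawMod Bᵐᵒᵖ),
    ∀ N : RawMod Bᵐᵒᵖ, IsGenericModule Bᵐᵒᵖ N → endolength Bᵐᵒᵖ N = (d : ℕ∞) →
      ∃ i, Nonempty (N.M ≃ₗ[Bᵐᵒᵖ] (T i).M)

/-- A tame generalized multicoil algebra. -/
def IsTameGeneralizedMulticoilAlgebra (B : Type u) [Ring B] : Prop :=
  IsGeneralizedMulticoilAlgebra B ∧ IsGenericallyTameAlg B

/-- A tame generalized double tilted algebra. -/
def IsTameGeneralizedDoubleTiltedAlgebra (B : Type u) [Ring B] : Prop :=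
  IsGeneralizedDoubleTiltedAlgebra B ∧ IsGenericallyTameAlg B

/-! ### The quiver of an algebra, convex idempotents, basic and connected algebras -/

section AlgebraSide

variable (A : Type u) [Ring A]

/-- The Jacobson radical of `A` (as a left ideal; it is in fact two-sided). -/
def jacobsonRad : Ideal A := (⊥ : Ideal A).jacobson

/-- The square of the Jacobson radical of `A`. -/
def jacobsonRadSq : Ideal A :=
  Ideal.span {x | ∃ a ∈ jacobsonRad A, ∃ b ∈ jacobsonRad A, x = a * b}

/-- A primitive idempotent of `A`. -/
def IsPrimitiveIdempotent (e : A) : Prop :=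
  IsIdempotentElem e ∧ e ≠ 0 ∧
    ∀ f g : A, IsIdempotentElem f → IsIdempotentElem g → f * g = 0 → g * f = 0 →
      e = f + g → f = 0 ∨ g = 0

/-- A complete family of pairwise orthogonal primitive idempotents of `A`; its indices
are the vertices of the quiver `Q_A` of `A`. -/
structure CompleteIdemFamily (A : Type u) [Ring A] where
  n : ℕ
  e : Fin n → A
  prim : ∀ i, IsPrimitiveIdempotent A (e i)
  orth : ∀ i j, i ≠ j → e i * e j = 0
  total : ∑ i, e i = 1

/-- There is an arrow `i → j` in the quiver `Q_A` iff `e_i (rad A) e_j ⊄ (rad A)²`. -/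
def QAarrow (E : CompleteIdemFamily A) (i j : Fin E.n) : Prop :=
  ∃ y ∈ jacobsonRad A, E.e i * y * E.e j ∉ jacobsonRadSq A

/-- A set of vertices of `Q_A` is convex if every path of `Q_A` with source and target in
it has all its vertices in it. -/
def ConvexVertexSet (E : CompleteIdemFamily A) (S : Set (Fin E.n)) : Prop :=
  ∀ (n : ℕ) (c : ℕ → Fin E.n), (∀ k < n, QAarrow A E (c k) (c (k + 1))) →
    c 0 ∈ S → c n ∈ S → ∀ k ≤ n, c k ∈ S

/-- A convex idempotent of `A`: a sum of pairwise orthogonal primitive idempotents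
corresponding to the vertices of a convex subquiver of `Q_A`. -/
def IsConvexIdempotent (e : A) : Prop :=
  ∃ (E : CompleteIdemFamily A) (S : Finset (Fin E.n)),
    ConvexVertexSet A E ↑S ∧ e = ∑ i ∈ S, E.e i

/-- The corner `eAe` of `A` at an idempotent `e`, as a nonunital subring (it is a unital
ring with unit `e`). -/
def cornerRing (e : A) : NonUnitalSubring A where
  carrier := {x | e * x = x ∧ x * e = x}
  zero_mem' := by simp
  add_mem' := by
    rintro a b ⟨ha1, ha2⟩ ⟨hb1, hb2⟩
    constructor
    · rw [mul_add, ha1, hb1]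
    · rw [add_mul, ha2, hb2]
  neg_mem' := by
    rintro a ⟨ha1, ha2⟩
    constructor
    · rw [mul_neg, ha1]
    · rw [neg_mul, ha2]
  mul_mem' := by
    rintro a b ⟨ha1, ha2⟩ ⟨hb1, hb2⟩
    constructor
    · rw [← mul_assoc, ha1]
    · rw [mul_assoc, hb2]

/-- An (indecomposable =) connected algebra: no nontrivial central idempotents. -/
def IsConnectedAlgebra : Prop :=
  Nontrivial A ∧ ∀ e : A, IsIdempotentElem e → e ∈ Set.center A → e = 0 ∨ e = 1

/-- A basic algebra: distinct orthogonal primitive idempotents have nonisomorphic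
associated indecomposable projective right modules. -/
def IsBasicAlgebra : Prop :=
  ¬∃ e f : A, IsPrimitiveIdempotent A e ∧ IsPrimitiveIdempotent A f ∧
    e * f = 0 ∧ f * e = 0 ∧
    Nonempty ((Submodule.span Aᵐᵒᵖ {e} : Submodule Aᵐᵒᵖ A) ≃ₗ[Aᵐᵒᵖ]
      (Submodule.span Aᵐᵒᵖ {f} : Submodule Aᵐᵒᵖ A))

end AlgebraSide

/-! ### Support algebras and faithful algebras of families of vertices -/

section Support

variable (A : Type u) [Ring A]

/-- The radical of a module: the intersection of its maximal submodules. -/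
def modRadical (R : Type u) [Ring R] (M : Type u) [AddCommGroup M] [Module R M] :
    Submodule R M :=
  sInf {N | IsCoatom N}

/-- The intersection `ann_A(Γ)` of the annihilators of all right `A`-modules whose
vertices belong to `Γ`, as a two-sided ideal of `A`. -/
def annTwoSidedIdeal (Γ : Set (ARVertex Aᵐᵒᵖ)) : TwoSidedIdeal A :=
  TwoSidedIdeal.mk'
    {a | ∀ x ∈ Γ, ∀ X : IndecModA Aᵐᵒᵖ, ARVertex.mk X = x →
      ∀ m : X.1.M, MulOpposite.op a • m = 0}
    (by intro x _ X _ m; simp)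
    (by
      intro a b ha hb x hx X hX m
      have : MulOpposite.op (a + b) • m = MulOpposite.op a • m + MulOpposite.op b • m := by
        rw [← add_smul]; rfl
      rw [this, ha x hx X hX m, hb x hx X hX m, add_zero])
    (by
      intro a ha x hx X hX m
      have : MulOpposite.op (-a) • m = -(MulOpposite.op a • m) := by
        rw [← neg_smul]; rfl
      rw [this, ha x hx X hX m, neg_zero])
    (by
      intro a b hb x hx X hX m
      have : MulOpposite.op (a * b) • m = MulOpposite.op b • (MulOpposite.op a • m) := by
        rw [← mul_smul]; rfl
      rw [this, hb x hx X hX _])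
    (by
      intro a b ha x hx X hX m
      have : MulOpposite.op (a * b) • m = MulOpposite.op b • (MulOpposite.op a • m) := by
        rw [← mul_smul]; rfl
      rw [this, ha x hx X hX m, smul_zero])

/-- The faithful algebra `B(Γ) = A / ann_A(Γ)` of a family `Γ` of vertices of `Γ_A`. -/
abbrev faithfulAlg (Γ : Set (ARVertex Aᵐᵒᵖ)) : Type u :=
  (annTwoSidedIdeal A Γ).ringCon.Quotient

/-- The canonical projection `A → B(Γ)`. -/
def faithfulProj (Γ : Set (ARVertex Aᵐᵒᵖ)) : A →+* faithfulAlg A Γ :=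
  RingCon.mk' (annTwoSidedIdeal A Γ).ringCon

/-- The trace ideal `t_A(Γ)`: the two-sided ideal of `A` generated by the images of all
homomorphisms of right `A`-modules from `Q` to `A`. -/
def traceIdeal (Q : Submodule Aᵐᵒᵖ A) : TwoSidedIdeal A :=
  TwoSidedIdeal.span (⋃ f : ↥Q →ₗ[Aᵐᵒᵖ] A, Set.range f)

/-- A decomposition `A = P_Γ ⊕ Q_Γ` of `A` in `mod A` such that the simple summands of
`P_Γ / rad P_Γ` are exactly the simple composition factors of the modules in `Γ`. -/
structure GammaDecomp (A : Type u) [Ring A] (Γ : Set (ARVertex Aᵐᵒᵖ)) where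
  P : Submodule Aᵐᵒᵖ A
  Q : Submodule Aᵐᵒᵖ A
  compl : IsCompl P Q
  top_factors : ∀ (S : Type u) [AddCommGroup S] [Module Aᵐᵒᵖ S], IsSimpleModule Aᵐᵒᵖ S →
    (IsCompFactorMod Aᵐᵒᵖ S (↥P ⧸ modRadical Aᵐᵒᵖ ↥P) ↔
      ∃ x ∈ Γ, ∃ X : IndecModA Aᵐᵒᵖ, ARVertex.mk X = x ∧ IsCompFactorMod Aᵐᵒᵖ S X.1.M)

end Support

/-- Restriction of scalars along a surjective ring homomorphism `π : A → B` identifies a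
vertex `y` of `Γ_B` with a vertex `x` of `Γ_A`: representatives have the same underlying
group, with the `A`-action obtained from the `B`-action through `π`. -/
def VertexRestrictsTo {A B : Type u} [Ring A] [Ring B] (π : A →+* B)
    (y : ARVertex Bᵐᵒᵖ) (x : ARVertex Aᵐᵒᵖ) : Prop :=
  ∃ (N : IndecModA Bᵐᵒᵖ) (X : IndecModA Aᵐᵒᵖ), ARVertex.mk N = y ∧ ARVertex.mk X = x ∧
    ∃ e : X.1.M ≃+ N.1.M, ∀ (a : A) (m : X.1.M),
      e (MulOpposite.op a • m) = MulOpposite.op (π a) • e m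

/-! ### `K`-module structures on Hom-groups, lengths, and Ext -/

section KLength

variable (K B : Type u) [CommRing K] [Ring B] [Algebra K B]
variable (X N : Type u) [AddCommGroup X] [Module B X] [AddCommGroup N] [Module B N]

/-- The action of `K` on `B`-linear maps, through `algebraMap K B`. -/
def homKSMul (k : K) (f : X →ₗ[B] N) : X →ₗ[B] N where
  toFun x := algebraMap K B k • f x
  map_add' x y := by show algebraMap K B k • f (x + y) = _; rw [map_add, smul_add]
  map_smul' b x := by
    simp only [map_smul, RingHom.id_apply, smul_smul]
    rw [Algebra.commutes]

/-- The `K`-module structure on the group of `B`-linear maps. -/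
def homKModule : Module K (X →ₗ[B] N) where
  smul := homKSMul K B X N
  one_smul f := LinearMap.ext fun x => by
    show algebraMap K B 1 • f x = f x
    rw [map_one, one_smul]
  mul_smul k l f := LinearMap.ext fun x => by
    show algebraMap K B (k * l) • f x = algebraMap K B k • algebraMap K B l • f x
    rw [map_mul, mul_smul]
  smul_zero k := LinearMap.ext fun x => by
    show algebraMap K B k • (0 : X →ₗ[B] N) x = 0
    simp
  smul_add k f g := LinearMap.ext fun x => by
    show algebraMap K B k • (f + g) x = algebraMap K B k • f x + algebraMap K B k • g x
    simp [smul_add]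
  add_smul k l f := LinearMap.ext fun x => by
    show algebraMap K B (k + l) • f x = algebraMap K B k • f x + algebraMap K B l • f x
    rw [map_add, add_smul]
  zero_smul f := LinearMap.ext fun x => by
    show algebraMap K B 0 • f x = 0
    rw [map_zero, zero_smul]

/-- The length `|Hom_B(X, N)|` of the group of `B`-linear maps `X → N` as a `K`-module. -/
noncomputable def homKLength : WithBot ℕ∞ :=
  letI : Module K (X →ₗ[B] N) := homKModule K B X N
  Order.krullDim (Submodule K (X →ₗ[B] N))

/-- The canonical surjection from the free module on (the underlying set of) `X` to `X`. -/
noncomputable def freeCover : (X →₀ B) →ₗ[B] X :=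
  Finsupp.linearCombination B id

/-- The length `|Ext¹_B(X, N)|` of `Ext¹` as a `K`-module, computed as the cokernel of
`Hom_B(F, N) → Hom_B(Ω X, N)` for the canonical free cover `F → X` with kernel `Ω X`. -/
noncomputable def ext1KLength : WithBot ℕ∞ :=
  letI : Module K (↥(LinearMap.ker (freeCover B X)) →ₗ[B] N) :=
    homKModule K B (↥(LinearMap.ker (freeCover B X))) N
  let D : Submodule K (↥(LinearMap.ker (freeCover B X)) →ₗ[B] N) :=
    { carrier := {f | ∃ g : (X →₀ B) →ₗ[B] N,
        f = g.comp (LinearMap.ker (freeCover B X)).subtype}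
      add_mem' := by
        rintro f₁ f₂ ⟨g₁, rfl⟩ ⟨g₂, rfl⟩
        exact ⟨g₁ + g₂, rfl⟩
      zero_mem' := ⟨0, rfl⟩
      smul_mem' := by
        rintro k f ⟨g, rfl⟩
        exact ⟨homKSMul K B _ N k g, rfl⟩ }
  Order.krullDim (Submodule K ((↥(LinearMap.ker (freeCover B X)) →ₗ[B] N) ⧸ D))

end KLength

/-- Vanishing of `Ext¹_B(X, N)`: every short exact sequence `0 → N → E → X → 0` splits. -/
def Ext1IsZero (B : Type u) [Ring B] (X : Type u) [AddCommGroup X] [Module B X]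
    (N : Type u) [AddCommGroup N] [Module B N] : Prop :=
  ∀ (E : Type u) [AddCommGroup E] [Module B E], ∀ (f : N →ₗ[B] E) (g : E →ₗ[B] X),
    Function.Injective f → Function.Surjective g → LinearMap.range f = LinearMap.ker g →
    ∃ s : X →ₗ[B] E, g.comp s = LinearMap.id

/-- The syzygy `Ω X`: the kernel of the canonical free cover of `X`. -/
noncomputable def syzygyRaw (B : Type u) [Ring B] (X : RawMod B) : RawMod B :=
  ⟨↥(LinearMap.ker (freeCover B X.M))⟩

/-- Iterated syzygies. -/
noncomputable def syzygyIter (B : Type u) [Ring B] : ℕ → RawMod B → RawMod B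
  | 0, X => X
  | n + 1, X => syzygyRaw B (syzygyIter B n X)

/-- Vanishing of `Ext^r_B(X, N)` for `r ≥ 1`, via `Ext^r(X, N) ≅ Ext¹(Ω^{r-1} X, N)`. -/
noncomputable def ExtIsZero (B : Type u) [Ring B] (X N : RawMod B) (r : ℕ) : Prop :=
  Ext1IsZero B (syzygyIter B (r - 1) X).M N.M

/-- `[X] = [M]` in the Grothendieck group `K₀`: the modules `X` and `M` have the same
composition factors including multiplicities. -/
def SameCompFactors {B : Type u} [Ring B] (X M : ModA B) : Prop :=
  ∃ (n : ℕ) (s : Fin (n + 1) → Submodule B X.M) (t : Fin (n + 1) → Submodule B M.M)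
    (σ : Equiv.Perm (Fin n)),
    s 0 = ⊥ ∧ s (Fin.last n) = ⊤ ∧ t 0 = ⊥ ∧ t (Fin.last n) = ⊤ ∧
    (∀ i : Fin n, s i.castSucc ≤ s i.succ) ∧ (∀ i : Fin n, t i.castSucc ≤ t i.succ) ∧
    ∀ i : Fin n,
      IsSimpleModule B (↥(s i.succ) ⧸ (s i.castSucc).comap (s i.succ).subtype) ∧
      Nonempty ((↥(s i.succ) ⧸ (s i.castSucc).comap (s i.succ).subtype) ≃ₗ[B]
        (↥(t (σ i).succ) ⧸ (t (σ i).castSucc).comap (t (σ i).succ).subtype))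

/-- A torsion class in `mod B`: a class of modules closed under factor modules and
extensions. -/
def IsTorsionClass (B : Type u) [Ring B] (T : Set (ModA B)) : Prop :=
  (∀ M ∈ T, ∀ (N : ModA B) (g : M.M →ₗ[B] N.M), Function.Surjective g → N ∈ T) ∧
  ∀ (X E M : ModA B) (f : X.M →ₗ[B] E.M) (g : E.M →ₗ[B] M.M),
    Function.Injective f → Function.Surjective g → LinearMap.range f = LinearMap.ker g →
    X ∈ T → M ∈ T → E ∈ T

/-- A torsion class is functorially finite iff it is of the form `Fac(M)`. -/
def IsFunctoriallyFinite (B : Type u) [Ring B] (T : Set (ModA B)) : Prop :=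
  ∃ M : ModA B,
    T = {N | ∃ (k : ℕ) (g : (Fin k → M.M) →ₗ[B] N.M), Function.Surjective g}

/-- A module `M` is `τ`-rigid if `Hom(M, τM) = 0`. -/
def IsTauRigid {B : Type u} [Ring B] (M : ModA B) : Prop :=
  ∀ N : ModA B, IsTauOf N M → ∀ f : M.M →ₗ[B] N.M, f = 0

/-- A module `M` is rigid if `Ext¹(M, M) = 0`. -/
def IsRigid {B : Type u} [Ring B] (M : ModA B) : Prop := Ext1IsZero B M.M M.M

/-- `α(M) ≤ 2`: the middle term of any almost split sequence ending at `M` has at most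
two indecomposable direct summands. -/
def AlphaLe2 {B : Type u} [Ring B] (M : ModA B) : Prop :=
  ∀ s : AlmostSplitSeq B, s.r.Iso M →
    ∀ (k : ℕ) (N : Fin k → Submodule B s.m.M),
      (∀ i, IsIndecMod B ↥(N i)) → iSupIndep N → (⨆ i, N i) = ⊤ → k ≤ 2


namespace ARAbs

open CategoryTheory

universe v w

section Defs
variable {C : Type w} [Category.{v} C] [Preadditive C]

/-- `rad^n` of a preadditive category whose objects have local endomorphism rings. -/
def radP : ℕ → ∀ X Y : C, AddSubgroup (X ⟶ Y)
  | 0, _, _ => ⊤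
  | n + 1, X, Y => AddSubgroup.closure
      {f | ∃ (Z : C) (g : X ⟶ Z) (h : Z ⟶ Y), ¬IsIso g ∧ h ∈ radP n Z Y ∧ f = g ≫ h}

/-- The square of the radical, described symmetrically. -/
def radSq (X Y : C) : AddSubgroup (X ⟶ Y) := AddSubgroup.closure
  {f | ∃ (Z : C) (g : X ⟶ Z) (h : Z ⟶ Y), ¬IsIso g ∧ ¬IsIso h ∧ f = g ≫ h}

def Irr {X Y : C} (f : X ⟶ Y) : Prop := ¬IsIso f ∧ f ∉ radSq X Y

def Arrow (X Y : C) : Prop := ∃ f : X ⟶ Y, Irr f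

def Reach (X Y : C) : Prop :=
  Relation.ReflTransGen (fun A B : C => Arrow A B ∨ Nonempty (A ≅ B)) X Y

/-- An almost split sequence with decomposed middle term. -/
structure Triple (A Y : C) where
  n : ℕ
  E : Fin n → C
  c : ∀ i, A ⟶ E i
  e : ∀ i, E i ⟶ Y
  c_rad : ∀ i, ¬IsIso (c i)
  e_rad : ∀ i, ¬IsIso (e i)
  ras : ∀ (Z : C) (h : Z ⟶ Y), ¬IsIso h → ∃ k : ∀ i, Z ⟶ E i, h = ∑ i, k i ≫ e i
  las : ∀ (Z : C) (h : A ⟶ Z), ¬IsIso h → ∃ k : ∀ i, E i ⟶ Z, h = ∑ i, c i ≫ k i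
  ker : ∀ (Z : C) (k : ∀ i, Z ⟶ E i), ∑ i, k i ≫ e i = 0 → ∃ v : Z ⟶ A, ∀ i, k i = v ≫ c i
  coker : ∀ (Z : C) (k : ∀ i, E i ⟶ Z), ∑ i, c i ≫ k i = 0 → ∃ v : Y ⟶ Z, ∀ i, k i = e i ≫ v

/-- All endomorphism rings are local with nilpotent radical. -/
structure LocNil (C : Type w) [Category.{v} C] [Preadditive C] : Prop where
  one_ne : ∀ X : C, 𝟙 X ≠ 0
  add : ∀ (X : C) (f g : X ⟶ X), IsIso (f + g) → IsIso f ∨ IsIso g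
  nil : ∀ (X : C) (f : X ⟶ X), ¬IsIso f → ∃ n : ℕ, (show End X from f) ^ n = 0
end Defs

section Main
variable {C : Type w} [Category.{v} C] [Preadditive C] (H : LocNil C)
include H

theorem LocNil.idem {X : C} (p : X ⟶ X) (hp : p ≫ p = p) (h0 : p ≠ 0) : p = 𝟙 X := by
  rcases H.add X p (𝟙 X - p) (by simpa using (inferInstance : IsIso (𝟙 X))) with h | h
  · rw [← cancel_epi p, hp, Category.comp_id]
  · exfalso
    apply h0
    rw [← cancel_epi (𝟙 X - p)]
    simp [Preadditive.sub_comp, hp]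

/-- If a composite `f ≫ g` is an iso between indecomposables then so is `f`. -/
theorem LocNil.iso_left {X Y Z : C} (f : X ⟶ Y) (g : Y ⟶ Z) (h : IsIso (f ≫ g)) : IsIso f := by
  have h1 : f ≫ (g ≫ inv (f ≫ g)) = 𝟙 X := by rw [← Category.assoc, IsIso.hom_inv_id]
  refine ⟨g ≫ inv (f ≫ g), h1, ?_⟩
  apply H.idem
  · rw [Category.assoc, ← Category.assoc f, h1, Category.id_comp]
  · intro h0
    apply H.one_ne X
    calc 𝟙 X = f ≫ ((g ≫ inv (f ≫ g)) ≫ f) ≫ (g ≫ inv (f ≫ g)) := by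
          rw [Category.assoc, h1, Category.comp_id, h1]
      _ = 0 := by rw [h0]; simp

theorem LocNil.iso_right {X Y Z : C} (f : X ⟶ Y) (g : Y ⟶ Z) (h : IsIso (f ≫ g)) : IsIso g := by
  have := H.iso_left f g h
  exact IsIso.of_isIso_comp_left f g

theorem LocNil.add' {X Y : C} (f g : X ⟶ Y) (h : IsIso (f + g)) : IsIso f ∨ IsIso g := by
  have h1 : IsIso (f ≫ inv (f + g) + g ≫ inv (f + g)) := by
    rw [← Preadditive.add_comp, IsIso.hom_inv_id]; infer_instance
  rcases H.add _ _ _ h1 with h | h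
  · exact Or.inl (H.iso_left _ _ h)
  · exact Or.inr (H.iso_left _ _ h)

theorem LocNil.zero_not {X Y : C} : ¬IsIso (0 : X ⟶ Y) := by
  intro h
  apply H.one_ne X
  exact (IsIso.hom_inv_id (0 : X ⟶ Y)).symm.trans Limits.zero_comp

theorem LocNil.closure_not {X Y : C} (S : Set (X ⟶ Y)) (hS : ∀ f ∈ S, ¬IsIso f) (f : X ⟶ Y)
    (hf : f ∈ AddSubgroup.closure S) : ¬IsIso f := by
  induction hf using AddSubgroup.closure_induction with
  | mem x hx => exact hS x hx
  | zero => exact H.zero_not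
  | add x y _ _ hx hy => intro h; rcases H.add' _ _ h with h | h <;> tauto
  | neg x _ hx =>
    intro h; apply hx
    have : IsIso ((-x) ≫ (-𝟙 Y)) := by
      have : IsIso (-𝟙 Y) := ⟨-𝟙 Y, by simp, by simp⟩
      infer_instance
    simpa using this

omit H in
theorem comp_radP (n : ℕ) {X Y Z : C} (f : X ⟶ Y) (g : Y ⟶ Z) (hf : f ∈ radP n X Y) :
    f ≫ g ∈ radP n X Z := by
  induction n generalizing X Y with
  | zero => trivial
  | succ n ih =>
    simp only [radP] at hf ⊢
    induction hf using AddSubgroup.closure_induction with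
    | mem x hx =>
      obtain ⟨W, a, b, ha, hb, rfl⟩ := hx
      exact AddSubgroup.subset_closure ⟨W, a, b ≫ g, ha, ih _ _ hb, by simp⟩
    | zero => simp
    | add x y _ _ hx hy => rw [Preadditive.add_comp]; exact AddSubgroup.add_mem _ hx hy
    | neg x _ hx => rw [Preadditive.neg_comp]; exact AddSubgroup.neg_mem _ hx

theorem radP_comp (n : ℕ) {X Y Z : C} (f : X ⟶ Y) (g : Y ⟶ Z) (hg : g ∈ radP n Y Z) :
    f ≫ g ∈ radP n X Z := by
  cases n with
  | zero => trivial
  | succ n =>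
    simp only [radP] at hg ⊢
    induction hg using AddSubgroup.closure_induction with
    | mem x hx =>
      obtain ⟨W, a, b, ha, hb, rfl⟩ := hx
      exact AddSubgroup.subset_closure
        ⟨W, f ≫ a, b, fun h => ha (H.iso_right _ _ h), hb, by simp⟩
    | zero => simp
    | add x y _ _ hx hy => rw [Preadditive.comp_add]; exact AddSubgroup.add_mem _ hx hy
    | neg x _ hx => rw [Preadditive.comp_neg]; exact AddSubgroup.neg_mem _ hx

theorem radP_anti (n : ℕ) {X Y : C} : radP (n + 1) X Y ≤ radP n X Y := by
  rw [radP, AddSubgroup.closure_le]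
  rintro f ⟨Z, g, h, hg, hh, rfl⟩
  exact radP_comp H n g h hh

theorem radP_le {m n : ℕ} (hmn : m ≤ n) {X Y : C} : radP n X Y ≤ radP m X Y := by
  induction hmn with
  | refl => exact le_rfl
  | step _ ih => exact (radP_anti H _).trans ih

theorem mem_radP_one {X Y : C} (f : X ⟶ Y) : f ∈ radP 1 X Y ↔ ¬IsIso f := by
  constructor
  · intro hf
    simp only [radP] at hf
    refine H.closure_not _ ?_ f hf
    rintro _ ⟨Z, g, h, hg, -, rfl⟩ hi
    exact hg (H.iso_left _ _ hi)
  · intro hf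
    exact AddSubgroup.subset_closure ⟨Y, f, 𝟙 Y, hf, trivial, by simp⟩

theorem radP_two (X Y : C) : radP 2 X Y = radSq X Y := by
  rw [radP, radSq]
  congr 1
  ext f
  simp only [Set.mem_ofPred_eq, mem_radP_one H]

theorem radP_mul {a b : ℕ} {X Y Z : C} (f : X ⟶ Y) (g : Y ⟶ Z) (hf : f ∈ radP a X Y)
    (hg : g ∈ radP b Y Z) : f ≫ g ∈ radP (a + b) X Z := by
  induction a generalizing X Y with
  | zero => rw [Nat.zero_add]; exact radP_comp H b f g hg
  | succ n ih =>
    rw [Nat.succ_add]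
    simp only [radP] at hf ⊢
    induction hf using AddSubgroup.closure_induction with
    | mem x hx =>
      obtain ⟨W, p, q, hp, hq, rfl⟩ := hx
      exact AddSubgroup.subset_closure ⟨W, p, q ≫ g, hp, ih _ _ hq hg, by simp⟩
    | zero => simp
    | add x y _ _ hx hy => rw [Preadditive.add_comp]; exact AddSubgroup.add_mem _ hx hy
    | neg x _ hx => rw [Preadditive.neg_comp]; exact AddSubgroup.neg_mem _ hx

/-- Right-hand description of `rad^(n+1)`. -/
theorem radP_succ' (n : ℕ) (X Y : C) : radP (n + 1) X Y = AddSubgroup.closure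
    {f | ∃ (Z : C) (h : X ⟶ Z) (g : Z ⟶ Y), h ∈ radP n X Z ∧ ¬IsIso g ∧ f = h ≫ g} := by
  apply le_antisymm
  · induction n generalizing X with
    | zero =>
      intro f hf
      exact AddSubgroup.subset_closure
        ⟨X, 𝟙 X, f, trivial, (mem_radP_one H f).1 hf, by simp⟩
    | succ n ih =>
      rw [radP, AddSubgroup.closure_le]
      rintro f ⟨Z, g, h, hg, hh, rfl⟩
      have hh' := ih Z hh
      clear hh
      induction hh' using AddSubgroup.closure_induction with
      | mem x hx =>
        obtain ⟨W, p, q, hp, hq, rfl⟩ := hx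
        refine AddSubgroup.subset_closure ⟨W, g ≫ p, q, ?_, hq, by simp⟩
        exact AddSubgroup.subset_closure ⟨Z, g, p, hg, hp, rfl⟩
      | zero => simp
      | add x y _ _ hx hy => rw [Preadditive.comp_add]; exact AddSubgroup.add_mem _ hx hy
      | neg x _ hx => rw [Preadditive.comp_neg]; exact AddSubgroup.neg_mem _ hx
  · rw [AddSubgroup.closure_le]
    rintro f ⟨Z, h, g, hh, hg, rfl⟩
    exact radP_mul H h g hh ((mem_radP_one H g).2 hg)

theorem reach_aux (m : ℕ) {X Y : C} (f : X ⟶ Y) (hf : f ∈ radP m X Y)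
    (hf' : f ∉ radP (m + 1) X Y) : Reach X Y := by
  induction m generalizing X with
  | zero =>
    rw [Nat.zero_add, mem_radP_one H, not_not] at hf'
    exact Relation.ReflTransGen.single (Or.inr ⟨asIso f⟩)
  | succ m ih =>
    by_contra hR
    apply hf'
    rw [radP] at hf
    refine (AddSubgroup.closure_le _).2 ?_ hf
    rintro _ ⟨Z, g, h, hg, hh, rfl⟩
    by_contra hn
    apply hR
    have h1 : g ∉ radP 2 X Z := by
      intro hg2
      apply hn
      have := radP_mul H g h hg2 hh
      rwa [show 2 + m = m + 1 + 1 by omega] at this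
    have h2 : h ∉ radP (m + 1) Z Y := by
      intro hh2
      apply hn
      have := radP_mul H g h ((mem_radP_one H g).2 hg) hh2
      rwa [show 1 + (m + 1) = m + 1 + 1 by omega] at this
    rw [radP_two H] at h1
    exact Relation.ReflTransGen.head (Or.inl ⟨g, hg, h1⟩) (ih h hh h2)

theorem reach_of_not_mem (n : ℕ) {X Y : C} (f : X ⟶ Y) (hf : f ∉ radP n X Y) : Reach X Y := by
  induction n with
  | zero => exact absurd trivial hf
  | succ n ih =>
    by_cases h : f ∈ radP n X Y
    · exact reach_aux H n f h hf
    · exact ih h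

theorem radSq_comp {X Y Z : C} (f : X ⟶ Y) (g : Y ⟶ Z) (h : f ∈ radSq X Y) :
    f ≫ g ∈ radSq X Z := by
  rw [← radP_two H] at h ⊢; exact comp_radP 2 _ _ h

theorem comp_radSq {X Y Z : C} (f : X ⟶ Y) (g : Y ⟶ Z) (h : g ∈ radSq Y Z) :
    f ≫ g ∈ radSq X Z := by
  rw [← radP_two H] at h ⊢; exact radP_comp H 2 _ _ h

theorem Irr.comp_iso {X Y Z : C} {f : X ⟶ Y} (hf : Irr f) (g : Y ⟶ Z) [IsIso g] :
    Irr (f ≫ g) := by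
  refine ⟨fun h => hf.1 (H.iso_left _ _ h), fun h => hf.2 ?_⟩
  have := radSq_comp H _ (inv g) h
  simpa using this

theorem Irr.iso_comp {X Y Z : C} {f : Y ⟶ Z} (hf : Irr f) (g : X ⟶ Y) [IsIso g] :
    Irr (g ≫ f) := by
  refine ⟨fun h => hf.1 (H.iso_right _ _ h), fun h => hf.2 ?_⟩
  have := comp_radSq H (inv g) _ h
  simpa using this

omit H in
/-- An irreducible map into `Y` passes isomorphically through one of the `E i`. -/
theorem Triple.exists_iso {A Y : C} (T : Triple A Y) {X : C} (g : X ⟶ Y) (hg : Irr g)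
    (k : ∀ i, X ⟶ T.E i) (hk : g = ∑ i, k i ≫ T.e i) : ∃ i, IsIso (k i) := by
  by_contra hcon
  push Not at hcon
  apply hg.2
  rw [hk]
  refine AddSubgroup.sum_mem _ fun i _ => AddSubgroup.subset_closure ?_
  exact ⟨_, k i, T.e i, hcon i, T.e_rad i, rfl⟩

/-- The maps `c i` are irreducible. -/
theorem Triple.c_irr {A Y : C} (T : Triple A Y) (i : Fin T.n) : Irr (T.c i) := by
  refine ⟨T.c_rad i, fun h => ?_⟩
  -- every element of the radical square factors through `c` with radical coefficients
  have key : ∀ (Z : C) (f : A ⟶ Z), f ∈ radSq A Z →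
      ∃ k : ∀ j, T.E j ⟶ Z, (∀ j, ¬IsIso (k j)) ∧ f = ∑ j, T.c j ≫ k j := by
    intro Z f hf
    rw [radSq] at hf
    induction hf using AddSubgroup.closure_induction with
    | mem x hx =>
      obtain ⟨W, p, q, hp, hq, rfl⟩ := hx
      obtain ⟨k, rfl⟩ := T.las W p hp
      exact ⟨fun j => k j ≫ q, fun j h => hq (H.iso_right _ _ h), by
        simp [Preadditive.sum_comp]⟩
    | zero => exact ⟨fun j => 0, fun j => H.zero_not, by simp⟩
    | add x y _ _ hx hy =>
      obtain ⟨k, hk, rfl⟩ := hx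
      obtain ⟨l, hl, rfl⟩ := hy
      refine ⟨fun j => k j + l j, fun j h => ?_, by simp [Finset.sum_add_distrib]⟩
      rcases H.add' _ _ h with h | h
      · exact hk j h
      · exact hl j h
    | neg x _ hx =>
      obtain ⟨k, hk, rfl⟩ := hx
      refine ⟨fun j => -k j, fun j h => ?_, by simp⟩
      exact H.closure_not {k j} (by simpa using hk j) (-k j)
        (AddSubgroup.neg_mem _ (AddSubgroup.subset_closure rfl)) h
  obtain ⟨k, hk, hs⟩ := key _ _ h
  classical
  have hz : ∑ j, T.c j ≫ ((if hj : j = i then eqToHom (by rw [hj]) else 0) - k j) = 0 := by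
    simp only [Preadditive.comp_sub, Finset.sum_sub_distrib, ← hs]
    rw [Finset.sum_eq_single i]
    · simp
    · intro j _ hj; simp [hj]
    · simp
  obtain ⟨v, hv⟩ := T.coker _ _ hz
  have h1 := hv i
  simp only [dite_true, eqToHom_refl] at h1
  have h2 : IsIso (T.e i ≫ v + k i) := by
    rw [← h1, sub_add_cancel]; infer_instance
  rcases H.add' _ _ h2 with h | h
  · exact T.e_rad i (H.iso_left _ _ h)
  · exact hk i h

theorem Triple.arrow {A Y : C} (T : Triple A Y) {X : C} (g : X ⟶ Y) (hg : Irr g) : Arrow A X := by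
  obtain ⟨k, hk⟩ := T.ras X g hg.1
  obtain ⟨i, hi⟩ := T.exists_iso g hg k hk
  exact ⟨T.c i ≫ inv (k i), (T.c_irr H i).comp_iso H _⟩

/-- Composites of `n` irreducible maps. -/
inductive IrrPath : ∀ (n : ℕ) {Z Y : C}, (Z ⟶ Y) → Prop
  | nil (Y : C) : IrrPath 0 (𝟙 Y)
  | snoc {n : ℕ} {Z Y Y' : C} (F : Z ⟶ Y) (f : Y ⟶ Y') : IrrPath n F → Irr f →
      IrrPath (n + 1) (F ≫ f)

/-- Same, with almost split sequences ending at each target. -/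
inductive ARPath : ∀ (n : ℕ) {Z Y : C}, (Z ⟶ Y) → Prop
  | nil (Y : C) : ARPath 0 (𝟙 Y)
  | snoc {n : ℕ} {Z Y Y' : C} (F : Z ⟶ Y) (f : Y ⟶ Y') : ARPath n F → Irr f →
      (∃ A : C, Nonempty (Triple A Y')) → ARPath (n + 1) (F ≫ f)

theorem claim (n : ℕ) {Z Y : C} (F : Z ⟶ Y) (hF : ARPath n F) (hr : F ∈ radP (n + 1) Z Y)
    {X : C} (g : X ⟶ Y) (hg : Irr g) : Reach Z X := by
  induction hF generalizing X with
  | nil Y =>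
    exact absurd (inferInstance : IsIso (𝟙 Y)) ((mem_radP_one H _).1 hr)
  | @snoc n Z Y Y' F f hF hf hA ih =>
    obtain ⟨A, ⟨T⟩⟩ := hA
    have hAX : Reach A X := Relation.ReflTransGen.single (Or.inl (T.arrow H g hg))
    refine Relation.ReflTransGen.trans ?_ hAX
    by_cases hFr : F ∈ radP (n + 1) Z Y
    · obtain ⟨a, ha⟩ := T.arrow H f hf
      exact ih hFr a ha
    · have key : ∀ G : Z ⟶ Y', G ∈ radP (n + 1 + 1) Z Y' →
          ∃ k : ∀ i, Z ⟶ T.E i, (∀ i, k i ∈ radP (n + 1) Z (T.E i)) ∧ G = ∑ i, k i ≫ T.e i := by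
        intro G hG
        rw [radP_succ' H] at hG
        induction hG using AddSubgroup.closure_induction with
        | mem x hx =>
          obtain ⟨W, p, q, hp, hq, rfl⟩ := hx
          obtain ⟨k, rfl⟩ := T.ras W q hq
          exact ⟨fun j => p ≫ k j, fun j => comp_radP _ _ _ hp, by
            simp [Preadditive.comp_sum]⟩
        | zero => exact ⟨fun j => 0, fun j => AddSubgroup.zero_mem _, by simp⟩
        | add x y _ _ hx hy =>
          obtain ⟨k, hk, rfl⟩ := hx
          obtain ⟨l, hl, rfl⟩ := hy
          exact ⟨fun j => k j + l j, fun j => AddSubgroup.add_mem _ (hk j) (hl j), by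
            simp [Finset.sum_add_distrib]⟩
        | neg x _ hx =>
          obtain ⟨k, hk, rfl⟩ := hx
          exact ⟨fun j => -k j, fun j => AddSubgroup.neg_mem _ (hk j), by simp⟩
      obtain ⟨k, hk, hsum⟩ := key _ hr
      obtain ⟨l, hl⟩ := T.ras Y f hf.1
      obtain ⟨i, hi⟩ := T.exists_iso f hf l hl
      have hz : ∑ j, (F ≫ l j - k j) ≫ T.e j = 0 := by
        simp only [Preadditive.sub_comp, Finset.sum_sub_distrib, ← hsum, Category.assoc,
          ← Preadditive.comp_sum, ← hl, sub_self]
      obtain ⟨v, hv⟩ := T.ker _ _ hz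
      refine reach_of_not_mem H (n + 1) v fun hvr => hFr ?_
      have h1 : F ≫ l i ∈ radP (n + 1) Z (T.E i) := by
        have : F ≫ l i = v ≫ T.c i + k i := by rw [← hv i]; abel
        rw [this]
        exact AddSubgroup.add_mem _ (comp_radP _ _ _ hvr) (hk i)
      have h2 := comp_radP (n + 1) _ (inv (l i)) h1
      simpa using h2

omit H in
theorem IrrPath.split {n : ℕ} {Z Y : C} {F : Z ⟶ Y} (hF : IrrPath n F) :
    ARPath n F ∨ ∃ (P : C) (i : ℕ) (F2 : P ⟶ Y), Reach Z P ∧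
      (¬∃ A : C, Nonempty (Triple A P)) ∧ ARPath i F2 := by
  induction hF with
  | nil Y => exact Or.inl (.nil Y)
  | @snoc n Z Y Y' F f hF hf ih =>
    have hZY : ∀ {n : ℕ} {Z Y : C} {F : Z ⟶ Y}, IrrPath n F → Reach Z Y := by
      intro n Z Y F hF
      induction hF with
      | nil Y => exact .refl
      | snoc F f _ hf ih => exact .tail ih (Or.inl ⟨f, hf⟩)
    by_cases hA : ∃ A : C, Nonempty (Triple A Y')
    · rcases ih with h | ⟨P, i, F2, h1, h2, h3⟩
      · exact Or.inl (.snoc F f h hf hA)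
      · exact Or.inr ⟨P, i + 1, F2 ≫ f, h1, h2, .snoc F2 f h3 hf hA⟩
    · exact Or.inr ⟨Y', 0, 𝟙 Y', hZY (.snoc F f hF hf), hA, .nil Y'⟩

omit H in
theorem IrrPath.comp {m n : ℕ} {X Y Z : C} {F : X ⟶ Y} {G : Y ⟶ Z} (hF : IrrPath m F)
    (hG : IrrPath n G) : IrrPath (m + n) (F ≫ G) := by
  induction hG with
  | nil Y => simpa using hF
  | snoc G g _ hg ih => rw [← Category.assoc]; exact .snoc _ _ (ih hF) hg

theorem IrrPath.mem {n : ℕ} {Z Y : C} {F : Z ⟶ Y} (hF : IrrPath n F) : F ∈ radP n Z Y := by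
  induction hF with
  | nil Y => trivial
  | snoc F f _ hf ih => exact radP_mul H F f ih ((mem_radP_one H f).2 hf.1)

omit H in
theorem exists_irrPath {X Y : C} (h : Relation.TransGen Arrow X Y) :
    ∃ (n : ℕ) (F : X ⟶ Y), IrrPath (n + 1) F := by
  induction h with
  | single h =>
    obtain ⟨f, hf⟩ := h
    refine ⟨0, 𝟙 _ ≫ f, .snoc _ _ (.nil _) hf⟩
  | tail _ h ih =>
    obtain ⟨n, F, hF⟩ := ih
    obtain ⟨f, hf⟩ := h
    exact ⟨n + 1, F ≫ f, .snoc _ _ hF hf⟩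

theorem main_right {X Y : C} (g : X ⟶ Y) (hg : Irr g) (hY : Relation.TransGen Arrow Y Y)
    (hP : ∀ P : C, (∃ A : C, Nonempty (Triple A P)) ∨ ∀ w : P ⟶ Y, ∃ w' : P ⟶ X, w' ≫ g = w) :
    Reach Y X := by
  obtain ⟨n, F, hF⟩ := exists_irrPath hY
  have hni : ¬IsIso F := (mem_radP_one H F).1 (radP_le H (by omega) (hF.mem H))
  obtain ⟨N, hN⟩ := H.nil Y F hni
  have hpow : ∀ N : ℕ, ∃ k, IrrPath k ((show End Y from F) ^ N : End Y) := by
    intro N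
    induction N with
    | zero => exact ⟨0, by simpa using IrrPath.nil Y⟩
    | succ N ih =>
      obtain ⟨k, hk⟩ := ih
      refine ⟨n + 1 + k, ?_⟩
      rw [pow_succ]
      exact IrrPath.comp hF hk
  obtain ⟨k, hk⟩ := hpow N
  rw [hN] at hk
  rcases hk.split with h | ⟨P, i, F2, h1, h2, h3⟩
  · exact claim H k _ h (AddSubgroup.zero_mem _) g hg
  · refine Relation.ReflTransGen.trans h1 ?_
    by_cases hr : F2 ∈ radP (i + 1) P Y
    · exact claim H i F2 h3 hr g hg
    · obtain ⟨w', rfl⟩ := (hP P).resolve_left h2 F2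
      exact reach_of_not_mem H (i + 1) w' fun h => hr (comp_radP _ _ _ h)

end Main

section Op
variable {C : Type w} [Category.{v} C] [Preadditive C]

theorem LocNil.op (H : LocNil C) : LocNil Cᵒᵖ where
  one_ne X h := H.one_ne X.unop (by simpa using congrArg Quiver.Hom.unop h)
  add X f g h := by
    have : IsIso (f.unop + g.unop) := by
      rw [← unop_add]; infer_instance
    rcases H.add _ _ _ this with h | h
    · exact Or.inl ((isIso_unop_iff f).1 h)
    · exact Or.inr ((isIso_unop_iff g).1 h)
  nil X f h := by
    obtain ⟨n, hn⟩ := H.nil X.unop f.unop (fun h' => h ((isIso_unop_iff f).1 h'))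
    refine ⟨n, ?_⟩
    have key : ∀ n : ℕ, ((show End X from f) ^ n : X ⟶ X).unop
        = ((show End X.unop from f.unop) ^ n : X.unop ⟶ X.unop) := by
      intro n
      induction n with
      | zero => rfl
      | succ n ih =>
        have e1 : ((show End X from f) ^ (n + 1) : X ⟶ X) = f ≫ ((show End X from f) ^ n : End X) := by
          rw [pow_succ]; rfl
        have e2 : ((show End X.unop from f.unop) ^ (n + 1) : X.unop ⟶ X.unop)
            = ((show End X.unop from f.unop) ^ n : End X.unop) ≫ f.unop := by
          rw [pow_succ']; rfl
        rw [e1, e2, unop_comp, ih]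
    apply Quiver.Hom.unop_inj
    rw [key n, hn]; rfl

theorem op_mem_radSq {X Y : C} (f : X ⟶ Y) (hf : f ∈ radSq X Y) :
    f.op ∈ radSq (Opposite.op Y) (Opposite.op X) := by
  rw [radSq] at hf
  induction hf using AddSubgroup.closure_induction with
  | mem x hx =>
    obtain ⟨W, p, q, hp, hq, rfl⟩ := hx
    exact AddSubgroup.subset_closure ⟨Opposite.op W, q.op, p.op,
      fun h => hq ((isIso_op_iff q).1 h), fun h => hp ((isIso_op_iff p).1 h), rfl⟩
  | zero => exact AddSubgroup.zero_mem _
  | add x y _ _ hx hy => exact AddSubgroup.add_mem _ hx hy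
  | neg x _ hx => exact AddSubgroup.neg_mem _ hx

theorem unop_mem_radSq {X Y : Cᵒᵖ} (f : X ⟶ Y) (hf : f ∈ radSq X Y) :
    f.unop ∈ radSq Y.unop X.unop := by
  rw [radSq] at hf
  induction hf using AddSubgroup.closure_induction with
  | mem x hx =>
    obtain ⟨W, p, q, hp, hq, rfl⟩ := hx
    exact AddSubgroup.subset_closure ⟨W.unop, q.unop, p.unop,
      fun h => hq ((isIso_unop_iff q).1 h), fun h => hp ((isIso_unop_iff p).1 h), rfl⟩
  | zero => exact AddSubgroup.zero_mem _
  | add x y _ _ hx hy => exact AddSubgroup.add_mem _ hx hy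
  | neg x _ hx => exact AddSubgroup.neg_mem _ hx

theorem Irr.op {X Y : C} {f : X ⟶ Y} (hf : Irr f) : Irr f.op :=
  ⟨fun h => hf.1 ((isIso_op_iff f).1 h), fun h => hf.2 (unop_mem_radSq f.op h)⟩

theorem Irr.unop {X Y : Cᵒᵖ} {f : X ⟶ Y} (hf : Irr f) : Irr f.unop :=
  ⟨fun h => hf.1 ((isIso_unop_iff f).1 h), fun h => hf.2 (op_mem_radSq f.unop h)⟩

theorem transGen_op {X Y : C} (h : Relation.TransGen Arrow X Y) :
    Relation.TransGen Arrow (Opposite.op Y) (Opposite.op X) := by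
  induction h with
  | single h => obtain ⟨f, hf⟩ := h; exact .single ⟨f.op, hf.op⟩
  | tail _ h ih => obtain ⟨f, hf⟩ := h; exact .head ⟨f.op, hf.op⟩ ih

theorem Reach.unop {X Y : Cᵒᵖ} (h : Reach X Y) : Reach Y.unop X.unop := by
  induction h with
  | refl => exact .refl
  | tail _ h ih =>
    refine .head ?_ ih
    rcases h with ⟨f, hf⟩ | ⟨⟨e⟩⟩
    · exact Or.inl ⟨f.unop, hf.unop⟩
    · exact Or.inr ⟨e.unop⟩

def Triple.op {A Y : C} (T : Triple A Y) : Triple (Opposite.op Y) (Opposite.op A) where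
  n := T.n
  E i := Opposite.op (T.E i)
  c i := (T.e i).op
  e i := (T.c i).op
  c_rad i h := T.e_rad i ((isIso_op_iff _).1 h)
  e_rad i h := T.c_rad i ((isIso_op_iff _).1 h)
  ras Z h hh := by
    obtain ⟨k, hk⟩ := T.las Z.unop h.unop (fun h' => hh ((isIso_unop_iff h).1 h'))
    refine ⟨fun i => (k i).op, Quiver.Hom.unop_inj ?_⟩
    rw [hk, unop_sum]; rfl
  las Z h hh := by
    obtain ⟨k, hk⟩ := T.ras Z.unop h.unop (fun h' => hh ((isIso_unop_iff h).1 h'))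
    refine ⟨fun i => (k i).op, Quiver.Hom.unop_inj ?_⟩
    rw [hk, unop_sum]; rfl
  ker Z k hk := by
    obtain ⟨v, hv⟩ := T.coker Z.unop (fun i => (k i).unop) (by
      have := congrArg Quiver.Hom.unop hk
      rw [unop_sum] at this
      exact this)
    exact ⟨v.op, fun i => Quiver.Hom.unop_inj (hv i)⟩
  coker Z k hk := by
    obtain ⟨v, hv⟩ := T.ker Z.unop (fun i => (k i).unop) (by
      have := congrArg Quiver.Hom.unop hk
      rw [unop_sum] at this
      exact this)
    exact ⟨v.op, fun i => Quiver.Hom.unop_inj (hv i)⟩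

theorem main_left (H : LocNil C) {X Y : C} (g : X ⟶ Y) (hg : Irr g)
    (hX : Relation.TransGen Arrow X X)
    (hI : ∀ I : C, (∃ B : C, Nonempty (Triple I B)) ∨ ∀ w : X ⟶ I, ∃ w' : Y ⟶ I, g ≫ w' = w) :
    Reach Y X := by
  have := main_right H.op g.op hg.op (transGen_op hX) (by
    intro P
    rcases hI P.unop with ⟨B, ⟨T⟩⟩ | h
    · exact Or.inl ⟨Opposite.op B, ⟨T.op⟩⟩
    · refine Or.inr fun w => ?_
      obtain ⟨w', hw⟩ := h w.unop
      exact ⟨w'.op, Quiver.Hom.unop_inj hw⟩)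
  exact this.unop

end Op

end ARAbs


namespace ARMod

open CategoryTheory

variable {R : Type u} [Ring R]

instance noeth (X : ModA R) : IsNoetherian R X.M :=
  (isFiniteLength_iff_isNoetherian_isArtinian.1 X.finLen).1

instance artin (X : ModA R) : IsArtinian R X.M :=
  (isFiniteLength_iff_isNoetherian_isArtinian.1 X.finLen).2

/-- Bundle a Noetherian and Artinian module. -/
abbrev mkA (R : Type u) [Ring R] (M : Type u) [AddCommGroup M] [Module R M] [IsNoetherian R M]
    [IsArtinian R M] : ModA R :=
  ⟨M, isFiniteLength_iff_isNoetherian_isArtinian.2 ⟨inferInstance, inferInstance⟩⟩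

section Fitting
variable {M : Type u} [AddCommGroup M] [Module R M] [IsNoetherian R M] [IsArtinian R M]

theorem fitting (hM : IsIndecMod R M) (f : Module.End R M) :
    Function.Bijective f ∨ IsNilpotent f := by
  obtain ⟨n, hn, hn1⟩ := ((LinearMap.eventually_isCompl_ker_pow_range_pow f).and
    (Filter.eventually_ge_atTop 1)).exists
  obtain ⟨p, hp, hp1, hp2⟩ : ∃ p : Module.End R M, p * p = p ∧
      LinearMap.range p = LinearMap.ker (f ^ n) ∧ LinearMap.ker p = LinearMap.range (f ^ n) := by
    refine ⟨_, Submodule.isIdempotentElem_projection hn, Submodule.range_projection hn,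
      Submodule.ker_projection hn⟩
  rcases hM.2 p hp with rfl | rfl
  · left
    have h0 : LinearMap.ker (f ^ n) = ⊥ := by rw [← hp1]; exact LinearMap.range_zero
    have : LinearMap.ker f = ⊥ := by
      rw [eq_bot_iff, ← h0]
      intro x hx
      obtain ⟨m, rfl⟩ : ∃ m, n = m + 1 := ⟨n - 1, by omega⟩
      rw [LinearMap.mem_ker] at hx ⊢
      rw [pow_succ, Module.End.mul_apply, hx, map_zero]
    exact IsArtinian.bijective_of_injective_endomorphism f (LinearMap.ker_eq_bot.1 this)
  · right
    refine ⟨n, LinearMap.range_eq_bot.1 ?_⟩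
    rw [← hp2]
    exact LinearMap.ker_id

theorem local_add (hM : IsIndecMod R M) (f g : Module.End R M) (h : Function.Bijective (f + g)) :
    Function.Bijective f ∨ Function.Bijective g := by
  obtain ⟨u, hu⟩ := (Module.End.isUnit_iff _).2 h
  have hs : (↑u⁻¹ * f) + (↑u⁻¹ * g) = 1 := by rw [← mul_add, ← hu]; simp
  rcases fitting hM (↑u⁻¹ * f) with h1 | h1
  · left
    rw [← Module.End.isUnit_iff] at h1 ⊢
    simpa using h1
  · right
    have h2 := h1.isUnit_one_sub
    rw [← hs, add_sub_cancel_left] at h2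
    rw [← Module.End.isUnit_iff]
    simpa using h2
end Fitting

/-- Biproduct decompositions into indecomposables. -/
structure Dec (M : Type u) [AddCommGroup M] [Module R M] (ι : Type) [Fintype ι] where
  E : ι → ModA R
  indec : ∀ i, (E i).IsIndec
  inj : ∀ i, (E i).M →ₗ[R] M
  prj : ∀ i, M →ₗ[R] (E i).M
  same : ∀ i, (prj i).comp (inj i) = LinearMap.id
  diff : ∀ i j, i ≠ j → (prj i).comp (inj j) = 0
  total : ∑ i, (inj i).comp (prj i) = LinearMap.id

theorem exists_dec_aux (M : Type u) [AddCommGroup M] [Module R M] [IsNoetherian R M]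
    [IsArtinian R M] : ∃ (ι : Type) (_ : Fintype ι), Nonempty (Dec (R := R) M ι) := by
  induction h : Module.length R M using WellFoundedLT.induction generalizing M with
  | ind l ih =>
  rcases subsingleton_or_nontrivial M with hs | hn
  · refine ⟨Empty, inferInstance, ⟨⟨nofun, nofun, nofun, nofun, nofun, nofun, ?_⟩⟩⟩
    ext x; exact Subsingleton.elim _ _
  by_cases hi : IsIndecMod R M
  · refine ⟨Unit, inferInstance, ⟨⟨fun _ => mkA R M, fun _ => hi, fun _ => LinearMap.id,
      fun _ => LinearMap.id, fun _ => rfl, fun i j hij => absurd rfl hij, ?_⟩⟩⟩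
    simp
  · simp only [IsIndecMod, hn, true_and, not_forall, not_or] at hi
    obtain ⟨p, hp, hp0, hp1⟩ := hi
    have key : ∀ q : Module.End R M, q * q = q → q ≠ 1 →
        ∃ (ι : Type) (_ : Fintype ι), Nonempty (Dec (R := R) (LinearMap.range q) ι) := by
      intro q hq hq1
      refine ih _ ?_ (LinearMap.range q) rfl
      rw [← h]
      apply Submodule.length_lt
      intro ht
      apply hq1
      ext x
      obtain ⟨y, rfl⟩ := LinearMap.range_eq_top.1 ht x
      exact LinearMap.congr_fun hq y
    obtain ⟨ι, _, ⟨D⟩⟩ := key p hp hp1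
    have hp' : (1 - p) * (1 - p) = 1 - p := by rw [mul_sub, sub_mul, sub_mul, hp]; simp
    obtain ⟨κ, _, ⟨D'⟩⟩ := key (1 - p) hp' (by simpa using hp0)
    have fix : ∀ (q : Module.End R M), q * q = q → ∀ x : LinearMap.range q, q x = x := by
      rintro q hq ⟨_, y, rfl⟩; exact LinearMap.congr_fun hq y
    have kill : ∀ (q q' : Module.End R M), q * q' = 0 → ∀ x : LinearMap.range q', q x = 0 := by
      rintro q q' hq ⟨_, y, rfl⟩; exact LinearMap.congr_fun hq y
    have e1 : p * (1 - p) = 0 := by rw [mul_sub, hp]; simp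
    have e2 : (1 - p) * p = 0 := by rw [sub_mul, hp]; simp
    refine ⟨ι ⊕ κ, inferInstance, ⟨⟨Sum.elim D.E D'.E, ?_, ?_, ?_, ?_, ?_, ?_⟩⟩⟩
    · rintro (i | i)
      · exact D.indec i
      · exact D'.indec i
    · rintro (i | i)
      · exact (LinearMap.range p).subtype.comp (D.inj i)
      · exact (LinearMap.range (1 - p)).subtype.comp (D'.inj i)
    · rintro (i | i)
      · exact (D.prj i).comp p.rangeRestrict
      · exact (D'.prj i).comp (1 - p).rangeRestrict
    · rintro (i | i)
      · ext x
        have : p.rangeRestrict (D.inj i x : M) = D.inj i x := Subtype.ext (fix p hp _)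
        change D.prj i (p.rangeRestrict (D.inj i x : M)) = x
        rw [this]; exact LinearMap.congr_fun (D.same i) x
      · ext x
        have : (1 - p).rangeRestrict (D'.inj i x : M) = D'.inj i x := Subtype.ext (fix _ hp' _)
        change D'.prj i ((1 - p).rangeRestrict (D'.inj i x : M)) = x
        rw [this]; exact LinearMap.congr_fun (D'.same i) x
    · rintro (i | i) (j | j) hij
      · ext x
        have : p.rangeRestrict (D.inj j x : M) = D.inj j x := Subtype.ext (fix p hp _)
        change D.prj i (p.rangeRestrict (D.inj j x : M)) = 0
        rw [this]; exact LinearMap.congr_fun (D.diff i j (fun h => hij (by rw [h]))) x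
      · ext x
        have : p.rangeRestrict (D'.inj j x : M) = 0 := Subtype.ext (kill _ _ e1 _)
        change D.prj i (p.rangeRestrict (D'.inj j x : M)) = 0
        rw [this, map_zero]
      · ext x
        have : (1 - p).rangeRestrict (D.inj j x : M) = 0 := Subtype.ext (kill _ _ e2 _)
        change D'.prj i ((1 - p).rangeRestrict (D.inj j x : M)) = 0
        rw [this, map_zero]
      · ext x
        have : (1 - p).rangeRestrict (D'.inj j x : M) = D'.inj j x := Subtype.ext (fix _ hp' _)
        change D'.prj i ((1 - p).rangeRestrict (D'.inj j x : M)) = 0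
        rw [this]; exact LinearMap.congr_fun (D'.diff i j (fun h => hij (by rw [h]))) x
    · rw [Fintype.sum_sum_type]
      have t1 := D.total
      have t2 := D'.total
      ext x
      have u1 := congrArg Subtype.val (LinearMap.congr_fun t1 (p.rangeRestrict x))
      have u2 := congrArg Subtype.val (LinearMap.congr_fun t2 ((1 - p).rangeRestrict x))
      simp only [LinearMap.sum_apply, LinearMap.comp_apply, Submodule.coe_sum, LinearMap.id_apply,
        LinearMap.codRestrict_apply] at u1 u2
      simp only [LinearMap.add_apply, LinearMap.sum_apply, LinearMap.comp_apply,
        Submodule.subtype_apply, LinearMap.id_apply]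
      erw [u1, u2]
      simp

theorem exists_dec (M : Type u) [AddCommGroup M] [Module R M] [IsNoetherian R M]
    [IsArtinian R M] : ∃ n : ℕ, Nonempty (Dec (R := R) M (Fin n)) := by
  obtain ⟨ι, _, ⟨D⟩⟩ := exists_dec_aux (R := R) M
  let e := (Fintype.equivFin ι).symm
  refine ⟨Fintype.card ι, ⟨⟨fun i => D.E (e i), fun i => D.indec _, fun i => D.inj _,
    fun i => D.prj _, fun i => D.same _, fun i j hij => D.diff _ _ (fun h => hij (e.injective h)),
    ?_⟩⟩⟩
  rw [← D.total]
  exact Equiv.sum_comp e (fun i => (D.inj i).comp (D.prj i))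

instance : Category (IndecModA R) where
  Hom X Y := X.1.M →ₗ[R] Y.1.M
  id X := LinearMap.id
  comp f g := g.comp f

instance : Preadditive (IndecModA R) where
  homGroup X Y := inferInstanceAs (AddCommGroup (X.1.M →ₗ[R] Y.1.M))
  add_comp X Y Z f g h := LinearMap.comp_add f g h
  comp_add X Y Z f g h := LinearMap.add_comp f h g

/-- A linear map as a morphism. -/
def hom {X Y : IndecModA R} (f : X.1.M →ₗ[R] Y.1.M) : X ⟶ Y := f

/-- A morphism as a linear map. -/
def lin {X Y : IndecModA R} : (X ⟶ Y) →+ (X.1.M →ₗ[R] Y.1.M) := AddMonoidHom.id _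

theorem lin_inj {X Y : IndecModA R} {f g : X ⟶ Y} (h : ∀ x, lin f x = lin g x) : f = g :=
  LinearMap.ext h

@[simp] theorem lin_hom {X Y : IndecModA R} (f : X.1.M →ₗ[R] Y.1.M) : lin (hom f) = f := rfl
@[simp] theorem hom_lin {X Y : IndecModA R} (f : X ⟶ Y) : hom (lin f) = f := rfl
@[simp] theorem lin_comp {X Y Z : IndecModA R} (f : X ⟶ Y) (g : Y ⟶ Z) :
    lin (f ≫ g) = (lin g).comp (lin f) := rfl
@[simp] theorem lin_id (X : IndecModA R) : lin (𝟙 X) = LinearMap.id := rfl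

theorem isIso_iff {X Y : IndecModA R} (f : X ⟶ Y) :
    IsIso f ↔ Function.Bijective (lin f) := by
  constructor
  · rintro ⟨g, h1, h2⟩
    exact Function.bijective_iff_has_inverse.2
      ⟨lin g, LinearMap.congr_fun h1, LinearMap.congr_fun h2⟩
  · intro h
    let e := LinearEquiv.ofBijective _ h
    exact ⟨(e.symm : Y.1.M →ₗ[R] X.1.M), LinearMap.ext e.symm_apply_apply,
      LinearMap.ext e.apply_symm_apply⟩

theorem locNil : ARAbs.LocNil (IndecModA R) where
  one_ne X h := by
    obtain ⟨x, hx⟩ := @exists_ne _ X.2.1 (0 : X.1.M)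
    exact hx (LinearMap.congr_fun h x)
  add X f g h := by
    rw [isIso_iff] at h ⊢
    rw [isIso_iff]
    rw [map_add] at h
    exact local_add X.2 (lin f) (lin g) h
  nil X f h := by
    rw [isIso_iff] at h
    obtain ⟨n, hn⟩ := (fitting X.2 _).resolve_left h
    refine ⟨n, ?_⟩
    have : ∀ n : ℕ, lin ((show End X from f) ^ n) = (lin f : Module.End R X.1.M) ^ n := by
      intro n
      induction n with
      | zero => rfl
      | succ n ih => rw [pow_succ, pow_succ, ← ih]; rfl
    refine lin_inj fun x => ?_
    rw [this n, hn]
    rfl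

theorem iso_iff {X Y : IndecModA R} : Nonempty (X ≅ Y) ↔ ARVertex.mk X = ARVertex.mk Y := by
  constructor
  · rintro ⟨e⟩
    exact Quotient.sound ⟨LinearEquiv.ofBijective _ ((isIso_iff e.hom).1 inferInstance)⟩
  · intro h
    obtain ⟨e⟩ : X.1.Iso Y.1 := Quotient.exact h
    have : IsIso (hom (e : X.1.M →ₗ[R] Y.1.M) : X ⟶ Y) := (isIso_iff _).2 e.bijective
    exact ⟨asIso (hom (e : X.1.M →ₗ[R] Y.1.M) : X ⟶ Y)⟩

/-- A split mono from an indecomposable to an indecomposable is an iso. -/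
theorem iso_of_splitMono {X Y : IndecModA R} (f : X ⟶ Y)
    (h : SplitMonoMap (X := X.1) (Y := Y.1) (lin f)) : IsIso f := by
  obtain ⟨r, hr⟩ := h
  have hr' : f ≫ (hom r : Y ⟶ X) = 𝟙 X := hr
  exact locNil.iso_left f (hom r) (by rw [hr']; infer_instance)

theorem iso_of_splitEpi {X Y : IndecModA R} (f : X ⟶ Y)
    (h : SplitEpiMap (X := X.1) (Y := Y.1) (lin f)) : IsIso f := by
  obtain ⟨r, hr⟩ := h
  have hr' : (hom r : Y ⟶ X) ≫ f = 𝟙 Y := hr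
  exact locNil.iso_right (hom r) f (by rw [hr']; infer_instance)

theorem splitMono_of_iso {X Y : IndecModA R} (f : X ⟶ Y) (h : IsIso f) :
    SplitMonoMap (X := X.1) (Y := Y.1) (lin f) := ⟨lin (inv f), IsIso.hom_inv_id f⟩

theorem splitEpi_of_iso {X Y : IndecModA R} (f : X ⟶ Y) (h : IsIso f) :
    SplitEpiMap (X := X.1) (Y := Y.1) (lin f) := ⟨lin (inv f), IsIso.inv_hom_id f⟩

/-- If a sum of endomorphisms of an indecomposable is an iso, then so is a summand. -/
theorem exists_iso_of_sum {C : Type*} [Category C] [Preadditive C] (H : ARAbs.LocNil C)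
    {ι : Type} (s : Finset ι) {X Y : C} (f : ι → (X ⟶ Y)) (h : IsIso (∑ i ∈ s, f i)) :
    ∃ i ∈ s, IsIso (f i) := by
  by_contra hc
  push Not at hc
  refine H.closure_not {g | ¬IsIso g} (fun f hf => hf) _ ?_ h
  exact AddSubgroup.sum_mem _ fun i hi => AddSubgroup.subset_closure (hc i hi)

theorem irr_of_isIrred {X Y : IndecModA R} (f : X ⟶ Y) (hf : IsIrred (X := X.1) (Y := Y.1) (lin f)) :
    ARAbs.Irr f := by
  refine ⟨fun h => hf.1 (splitMono_of_iso f h), fun h => ?_⟩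
  have key : ∀ f : X ⟶ Y, f ∈ ARAbs.radSq X Y → ∃ (n : ℕ) (Z : Fin n → IndecModA R)
      (a : ∀ i, X ⟶ Z i) (b : ∀ i, Z i ⟶ Y), (∀ i, ¬IsIso (a i)) ∧ (∀ i, ¬IsIso (b i)) ∧
      f = ∑ i, a i ≫ b i := by
    intro f hf
    rw [ARAbs.radSq] at hf
    induction hf using AddSubgroup.closure_induction with
    | mem x hx =>
      obtain ⟨W, p, q, hp, hq, rfl⟩ := hx
      exact ⟨1, fun _ => W, fun _ => p, fun _ => q, fun _ => hp, fun _ => hq, by simp⟩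
    | zero => exact ⟨0, nofun, nofun, nofun, nofun, nofun, by simp⟩
    | add x y _ _ hx hy =>
      obtain ⟨n, Z, a, b, ha, hb, rfl⟩ := hx
      obtain ⟨m, Z', a', b', ha', hb', rfl⟩ := hy
      refine ⟨n + m, fun i => Fin.addCases Z Z' i,
        fun i => Fin.addCases (motive := fun i => X ⟶ Fin.addCases Z Z' i)
          (fun i => a i ≫ eqToHom (by simp)) (fun i => a' i ≫ eqToHom (by simp)) i,
        fun i => Fin.addCases (motive := fun i => (Fin.addCases Z Z' i : IndecModA R) ⟶ Y)
          (fun i => eqToHom (by simp) ≫ b i) (fun i => eqToHom (by simp) ≫ b' i) i, ?_, ?_, ?_⟩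
      · intro i
        refine Fin.addCases (fun i h => ?_) (fun i h => ?_) i
        · simp only [Fin.addCases_left] at h
          exact ha i (locNil.iso_left _ _ h)
        · simp only [Fin.addCases_right] at h
          exact ha' i (locNil.iso_left _ _ h)
      · intro i
        refine Fin.addCases (fun i h => ?_) (fun i h => ?_) i
        · simp only [Fin.addCases_left] at h
          exact hb i (locNil.iso_right _ _ h)
        · simp only [Fin.addCases_right] at h
          exact hb' i (locNil.iso_right _ _ h)
      · rw [Fin.sum_univ_add]
        simp
    | neg x _ hx =>
      obtain ⟨n, Z, a, b, ha, hb, rfl⟩ := hx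
      refine ⟨n, Z, a, fun i => -b i, ha, fun i h => ?_, by simp⟩
      exact locNil.closure_not {b i} (by simpa using hb i) (-b i)
        (AddSubgroup.neg_mem _ (AddSubgroup.subset_closure rfl)) h
  obtain ⟨n, Z, a, b, ha, hb, hab⟩ := key f h
  let p : X.1.M →ₗ[R] (∀ i, (Z i).1.M) := LinearMap.pi fun i => lin (a i)
  let q : (∀ i, (Z i).1.M) →ₗ[R] Y.1.M := ∑ i, (lin (b i)).comp (LinearMap.proj i)
  have hqp : q.comp p = lin f := by
    rw [hab, map_sum]
    ext x
    simp only [q, p, LinearMap.comp_apply, LinearMap.sum_apply, LinearMap.proj_apply, lin_comp]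
    rfl
  rcases hf.2.2 (mkA R (∀ i, (Z i).1.M)) p q hqp with ⟨r, hr⟩ | ⟨s, hs⟩
  · change (∀ i, (Z i).1.M) →ₗ[R] X.1.M at r
    let r' : ∀ i, Z i ⟶ X := fun i => hom (r.comp (LinearMap.single R (fun i => (Z i).1.M) i))
    have h1 : ∑ i, a i ≫ r' i = 𝟙 X := by
      refine lin_inj fun x => ?_
      rw [map_sum]
      simp only [LinearMap.sum_apply]
      refine Eq.trans ?_ (LinearMap.congr_fun hr x)
      change ∑ i, r (Pi.single i (lin (a i) x)) = r (p x)
      refine (map_sum r _ _).symm.trans (congrArg r ?_)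
      exact Finset.univ_sum_single (p x)
    obtain ⟨i, -, hi⟩ := exists_iso_of_sum locNil Finset.univ
      (fun i => a i ≫ r' i) (by rw [h1]; infer_instance)
    exact ha i (locNil.iso_left _ _ hi)
  · change Y.1.M →ₗ[R] (∀ i, (Z i).1.M) at s
    let s' : ∀ i, Y ⟶ Z i := fun i =>
      hom ((LinearMap.proj (φ := fun i => (Z i).1.M) i).comp s)
    have h1 : ∑ i, s' i ≫ b i = 𝟙 Y := by
      refine lin_inj fun x => ?_
      rw [map_sum]
      refine Eq.trans ?_ (LinearMap.congr_fun hs x)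
      simp only [LinearMap.sum_apply, LinearMap.comp_apply, q]
      rfl
    obtain ⟨i, -, hi⟩ := exists_iso_of_sum locNil Finset.univ
      (fun i => s' i ≫ b i) (by rw [h1]; infer_instance)
    exact hb i (locNil.iso_right _ _ hi)

theorem isIrred_of_irr {X Y : IndecModA R} (f : X ⟶ Y) (hf : ARAbs.Irr f) :
    IsIrred (X := X.1) (Y := Y.1) (lin f) := by
  refine ⟨fun h => hf.1 (iso_of_splitMono f h), fun h => hf.1 (iso_of_splitEpi f h), ?_⟩
  intro Z g h hgh
  by_contra hc
  push Not at hc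
  apply hf.2
  obtain ⟨n, ⟨D⟩⟩ := exists_dec (R := R) Z.M
  let E : Fin n → IndecModA R := fun i => ⟨D.E i, D.indec i⟩
  let p : ∀ i, X ⟶ E i := fun i => hom ((D.prj i).comp g)
  let q : ∀ i, E i ⟶ Y := fun i => hom (h.comp (D.inj i))
  have h1 : f = ∑ i, p i ≫ q i := by
    refine lin_inj fun x => ?_
    rw [map_sum, ← hgh]
    have := LinearMap.congr_fun D.total (g x)
    simp only [LinearMap.sum_apply, LinearMap.comp_apply, LinearMap.id_apply] at this
    simp only [LinearMap.sum_apply, LinearMap.comp_apply]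
    conv_lhs => rw [← this]
    rw [map_sum]
    rfl
  rw [h1]
  refine AddSubgroup.sum_mem _ fun i _ => AddSubgroup.subset_closure ⟨_, _, _, ?_, ?_, rfl⟩
  · intro hi
    obtain ⟨r, hr⟩ := splitMono_of_iso _ hi
    exact hc.1 ⟨r.comp (D.prj i), hr⟩
  · intro hi
    obtain ⟨r, hr⟩ := splitEpi_of_iso _ hi
    exact hc.2 ⟨(D.inj i).comp r, hr⟩

theorem arArrow_iff {X Y : IndecModA R} :
    ARArrow (ARVertex.mk X) (ARVertex.mk Y) ↔ ARAbs.Arrow X Y := by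
  constructor
  · rintro ⟨X', Y', f, hf, hX, hY⟩
    obtain ⟨a⟩ := iso_iff.2 hX
    obtain ⟨b⟩ := iso_iff.2 hY
    have h1 := irr_of_isIrred (X := X') (Y := Y') (hom f) hf
    exact ⟨a.inv ≫ (hom f : X' ⟶ Y') ≫ b.hom,
      (h1.comp_iso locNil b.hom).iso_comp locNil a.inv⟩
  · rintro ⟨f, hf⟩
    exact ⟨X, Y, f, isIrred_of_irr f hf, rfl, rfl⟩

end ARMod


namespace ARMod

open CategoryTheory

section Gen
variable {R : Type*} [Ring R] {A B C D : Type*} [AddCommGroup A] [AddCommGroup B] [AddCommGroup C]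
  [AddCommGroup D] [Module R A] [Module R B] [Module R C] [Module R D]

theorem descend (g : A →ₗ[R] B) (hg : Function.Surjective g) (k : A →ₗ[R] C)
    (h : LinearMap.ker g ≤ LinearMap.ker k) : ∃ v : B →ₗ[R] C, v.comp g = k := by
  refine ⟨((LinearMap.ker g).liftQ k h).comp
    (g.quotKerEquivOfSurjective hg).symm.toLinearMap, ?_⟩
  ext x
  have : (g.quotKerEquivOfSurjective hg).symm (g x) = Submodule.Quotient.mk x := by
    rw [LinearEquiv.symm_apply_eq]; rfl
  simp only [LinearMap.comp_apply, LinearEquiv.coe_coe, this]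
  rfl

theorem coascend (f : A →ₗ[R] B) (hf : Function.Injective f) (k : C →ₗ[R] B)
    (h : LinearMap.range k ≤ LinearMap.range f) : ∃ v : C →ₗ[R] A, f.comp v = k := by
  refine ⟨(LinearEquiv.ofInjective f hf).symm.toLinearMap.comp
    (k.codRestrict _ fun c => h ⟨c, rfl⟩), ?_⟩
  ext x
  have := (LinearEquiv.ofInjective f hf).apply_symm_apply (k.codRestrict _ (fun c => h ⟨c, rfl⟩) x)
  exact congrArg Subtype.val this

theorem section_of_retraction (f : A →ₗ[R] B) (g : B →ₗ[R] C) (hg : Function.Surjective g)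
    (h : LinearMap.range f = LinearMap.ker g) (r : B →ₗ[R] A) (hr : r.comp f = LinearMap.id) :
    ∃ s : C →ₗ[R] B, g.comp s = LinearMap.id := by
  obtain ⟨s, hs⟩ := descend g hg (LinearMap.id - f.comp r) (by
    rw [← h]
    rintro _ ⟨a, rfl⟩
    have := LinearMap.congr_fun hr a
    simp only [LinearMap.comp_apply, LinearMap.id_apply] at this
    simp [this])
  refine ⟨s, ?_⟩
  ext c
  obtain ⟨b, rfl⟩ := hg c
  have := LinearMap.congr_fun hs b
  simp only [LinearMap.comp_apply, LinearMap.sub_apply, LinearMap.id_apply] at this ⊢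
  rw [this, map_sub]
  have h0 : g (f (r b)) = 0 := by
    have : f (r b) ∈ LinearMap.ker g := h ▸ ⟨_, rfl⟩
    exact this
  rw [h0, sub_zero]

theorem retraction_of_section (f : A →ₗ[R] B) (g : B →ₗ[R] C) (hf : Function.Injective f)
    (h : LinearMap.range f = LinearMap.ker g) (s : C →ₗ[R] B) (hs : g.comp s = LinearMap.id) :
    ∃ r : B →ₗ[R] A, r.comp f = LinearMap.id := by
  obtain ⟨r, hr⟩ := coascend f hf (LinearMap.id - s.comp g) (by
    rw [h]
    rintro _ ⟨b, rfl⟩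
    have := LinearMap.congr_fun hs (g b)
    simp only [LinearMap.comp_apply, LinearMap.id_apply] at this
    simp [this])
  refine ⟨r, ?_⟩
  ext a
  apply hf
  have := LinearMap.congr_fun hr (f a)
  simp only [LinearMap.comp_apply, LinearMap.sub_apply, LinearMap.id_apply] at this ⊢
  rw [this]
  have h0 : g (f a) = 0 := by
    have : f a ∈ LinearMap.ker g := h ▸ ⟨_, rfl⟩
    exact this
  rw [h0, map_zero, sub_zero]
end Gen

variable {R : Type u} [Ring R]

theorem Dec.total_apply {M : Type u} [AddCommGroup M] [Module R M] {n : ℕ}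
    (D : Dec (R := R) M (Fin n)) (x : M) : ∑ i, D.inj i (D.prj i x) = x := by
  have := LinearMap.congr_fun D.total x
  simpa only [LinearMap.sum_apply, LinearMap.comp_apply, LinearMap.id_apply] using this

theorem Dec.prj_sum {M : Type u} [AddCommGroup M] [Module R M] {n : ℕ}
    (D : Dec (R := R) M (Fin n)) (x : ∀ i, (D.E i).M) (j : Fin n) :
    D.prj j (∑ i, D.inj i (x i)) = x j := by
  rw [map_sum, Finset.sum_eq_single j]
  · exact LinearMap.congr_fun (D.same j) _
  · intro i _ hi
    exact LinearMap.congr_fun (D.diff j i hi.symm) _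
  · simp

theorem lin_sum_apply {ι : Type} (s : Finset ι) {X Y : IndecModA R} (f : ι → (X ⟶ Y)) (x : X.1.M) :
    lin (∑ i ∈ s, f i) x = ∑ i ∈ s, lin (f i) x := by
  rw [map_sum]
  exact LinearMap.sum_apply _ _ _

/-- Bundle an indecomposable module. -/
def mkI (X : ModA R) (h : X.IsIndec) : IndecModA R := ⟨X, h⟩

theorem triple (s : AlmostSplitSeq R) :
    Nonempty (ARAbs.Triple (mkI s.l s.l_indec) (mkI s.r s.r_indec)) := by
  obtain ⟨n, ⟨D⟩⟩ := exists_dec (R := R) s.m.M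
  have hex : ∀ a, s.g (s.f a) = 0 := fun a => by
    have : s.f a ∈ LinearMap.ker s.g := s.exact ▸ ⟨a, rfl⟩
    exact this
  refine ⟨{
    n := n
    E := fun i => mkI (D.E i) (D.indec i)
    c := fun i => hom ((D.prj i).comp s.f)
    e := fun i => hom (s.g.comp (D.inj i))
    c_rad := ?_
    e_rad := ?_
    ras := ?_
    las := ?_
    ker := ?_
    coker := ?_ }⟩
  · intro i hi
    obtain ⟨r, hr⟩ := splitMono_of_iso _ hi
    exact s.not_split (section_of_retraction s.f s.g s.surj s.exact (r.comp (D.prj i)) hr)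
  · intro i hi
    obtain ⟨r, hr⟩ := splitEpi_of_iso _ hi
    exact s.not_split ⟨(D.inj i).comp r, hr⟩
  · intro Z h hh
    obtain ⟨h', hh'⟩ := s.right_almost Z.1 (lin h) (fun hs => hh (iso_of_splitEpi h hs))
    refine ⟨fun i => hom ((D.prj i).comp h'), lin_inj fun x => ?_⟩
    refine (LinearMap.congr_fun hh' x).symm.trans (Eq.trans ?_ (lin_sum_apply (X := Z) (Y := mkI s.r s.r_indec) _ _ x).symm)
    change s.g (h' x) = ∑ i, s.g (D.inj i (D.prj i (h' x)))
    rw [← map_sum, D.total_apply]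
  · intro Z h hh
    obtain ⟨h', hh'⟩ := s.left_almost Z.1 (lin h) (fun hs => hh (iso_of_splitMono h hs))
    refine ⟨fun i => hom (h'.comp (D.inj i)), lin_inj fun x => ?_⟩
    refine (LinearMap.congr_fun hh' x).symm.trans (Eq.trans ?_ (lin_sum_apply _ _ x).symm)
    change h' (s.f x) = ∑ i, h' (D.inj i (D.prj i (s.f x)))
    refine Eq.trans ?_ (map_sum h' _ _)
    rw [D.total_apply]
  · intro Z k hk
    let K : Z.1.M →ₗ[R] s.m.M := ∑ i, (D.inj i).comp (lin (k i))
    have hK : ∀ x, K x = ∑ i, D.inj i (lin (k i) x) := fun x => by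
      simp only [K, LinearMap.sum_apply]; rfl
    obtain ⟨v, hv⟩ := coascend s.f s.inj K (by
      rw [s.exact]
      rintro _ ⟨x, rfl⟩
      have := (lin_sum_apply _ _ x).symm.trans (LinearMap.congr_fun (congrArg lin hk) x)
      rw [LinearMap.mem_ker, hK, map_sum]
      exact this)
    refine ⟨hom v, fun i => lin_inj fun x => ?_⟩
    have h1 := LinearMap.congr_fun hv x
    have h2 := D.prj_sum (fun i => lin (k i) x) i
    rw [← hK, ← h1] at h2
    exact h2.symm
  · intro Z k hk
    let K : s.m.M →ₗ[R] Z.1.M := ∑ i, (lin (k i)).comp (D.prj i)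
    have hK : ∀ x, K x = ∑ i, lin (k i) (D.prj i x) := fun x => by
      simp only [K, LinearMap.sum_apply]; rfl
    obtain ⟨v, hv⟩ := descend s.g s.surj K (by
      rw [← s.exact]
      rintro _ ⟨x, rfl⟩
      have := (lin_sum_apply (X := mkI s.l s.l_indec) (Y := Z) _ _ x).symm.trans (LinearMap.congr_fun (congrArg lin hk) x)
      rw [LinearMap.mem_ker, hK]
      exact this)
    refine ⟨hom v, fun i => lin_inj fun x => ?_⟩
    have h1 := LinearMap.congr_fun hv (D.inj i x)
    rw [hK, Finset.sum_eq_single i] at h1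
    · have h2 := LinearMap.congr_fun (D.same i) x
      change D.prj i (D.inj i x) = x at h2
      rw [h2] at h1
      exact h1.symm
    · intro j _ hj
      have h2 := LinearMap.congr_fun (D.diff j i hj) x
      change D.prj j (D.inj i x) = 0 at h2
      rw [h2]
      exact map_zero (lin (k j))
    · simp

end ARMod


namespace ARMod

variable {R : Type u} [Ring R]

/-- Right almost split maps. -/
def RAS {E Y : ModA R} (e : E.M →ₗ[R] Y.M) : Prop :=
  ¬SplitEpiMap e ∧ ∀ (Z : ModA R) (h : Z.M →ₗ[R] Y.M), ¬SplitEpiMap h →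
    ∃ h' : Z.M →ₗ[R] E.M, e.comp h' = h

/-- Left almost split maps. -/
def LAS {X E : ModA R} (f : X.M →ₗ[R] E.M) : Prop :=
  ¬SplitMonoMap f ∧ ∀ (Z : ModA R) (h : X.M →ₗ[R] Z.M), ¬SplitMonoMap h →
    ∃ h' : E.M →ₗ[R] Z.M, h'.comp f = h

theorem inverse_of_bijective {M N : Type*} [AddCommGroup M] [AddCommGroup N] [Module R M]
    [Module R N] (f : M →ₗ[R] N) (h : Function.Bijective f) :
    ∃ g : N →ₗ[R] M, g.comp f = LinearMap.id ∧ f.comp g = LinearMap.id :=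
  ⟨(LinearEquiv.ofBijective f h).symm,
    LinearMap.ext (LinearEquiv.ofBijective f h).symm_apply_apply,
    LinearMap.ext (LinearEquiv.ofBijective f h).apply_symm_apply⟩

theorem exists_min_ras {Y E₀ : ModA R} (e₀ : E₀.M →ₗ[R] Y.M) (h₀ : RAS e₀) :
    ∃ (E : ModA R) (e : E.M →ₗ[R] Y.M), RAS e ∧
      ∀ φ : E.M →ₗ[R] E.M, e.comp φ = e → Function.Bijective φ := by
  obtain ⟨E, ⟨e, he⟩, hmin⟩ :=
    (InvImage.wf (fun E : ModA R => Module.length R E.M) wellFounded_lt).has_min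
      {E | ∃ e : E.M →ₗ[R] Y.M, RAS e} ⟨E₀, e₀, h₀⟩
  refine ⟨E, e, he, fun φ hφ => ?_⟩
  have hφ' : ∀ x, e (φ x) = e x := LinearMap.congr_fun hφ
  have hs : Function.Surjective φ := by
    rw [← LinearMap.range_eq_top]
    by_contra hN
    refine hmin (mkA R (LinearMap.range φ)) ⟨e.comp (LinearMap.range φ).subtype, ?_, ?_⟩
      (Submodule.length_lt hN)
    · rintro ⟨s, hs⟩
      exact he.1 ⟨(LinearMap.range φ).subtype.comp s, hs⟩
    · intro Z h hh
      obtain ⟨h', rfl⟩ := he.2 Z h hh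
      exact ⟨φ.rangeRestrict.comp h', LinearMap.ext fun z => hφ' (h' z)⟩
  exact ⟨IsNoetherian.injective_of_surjective_endomorphism φ hs, hs⟩

theorem exists_min_las {X E₀ : ModA R} (f₀ : X.M →ₗ[R] E₀.M) (h₀ : LAS f₀) :
    ∃ (E : ModA R) (f : X.M →ₗ[R] E.M), LAS f ∧
      ∀ φ : E.M →ₗ[R] E.M, φ.comp f = f → Function.Bijective φ := by
  obtain ⟨E, ⟨f, hf⟩, hmin⟩ :=
    (InvImage.wf (fun E : ModA R => Module.length R E.M) wellFounded_lt).has_min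
      {E | ∃ f : X.M →ₗ[R] E.M, LAS f} ⟨E₀, f₀, h₀⟩
  refine ⟨E, f, hf, fun φ hφ => ?_⟩
  have hφ' : ∀ x, φ (f x) = f x := LinearMap.congr_fun hφ
  have hs : Function.Surjective φ := by
    rw [← LinearMap.range_eq_top]
    by_contra hN
    refine hmin (mkA R (LinearMap.range φ)) ⟨φ.rangeRestrict.comp f, ?_, ?_⟩
      (Submodule.length_lt hN)
    · rintro ⟨s, hs⟩
      exact hf.1 ⟨s.comp φ.rangeRestrict, hs⟩
    · intro Z h hh
      obtain ⟨h', rfl⟩ := hf.2 Z h hh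
      exact ⟨h'.comp (LinearMap.range φ).subtype, LinearMap.ext fun z => congrArg h' (hφ' z)⟩
  exact ⟨IsNoetherian.injective_of_surjective_endomorphism φ hs, hs⟩

theorem ass_right {Y E₀ : ModA R} (hY : Y.IsIndec) (e₀ : E₀.M →ₗ[R] Y.M) (h₀ : RAS e₀)
    (Q : ModA R) (q : Q.M →ₗ[R] Y.M) (hq : Function.Surjective q) (hqs : ¬SplitEpiMap q) :
    ∃ s : AlmostSplitSeq R, s.r = Y := by
  obtain ⟨E, e, he, hmin⟩ := exists_min_ras e₀ h₀
  have hsurj : Function.Surjective e := by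
    obtain ⟨q', hq'⟩ := he.2 Q q hqs
    intro y
    obtain ⟨x, rfl⟩ := hq y
    exact ⟨q' x, LinearMap.congr_fun hq' x⟩
  let C := LinearMap.ker e
  have hex : LinearMap.range C.subtype = LinearMap.ker e := Submodule.range_subtype _
  have hla : ∀ (Z : ModA R) (h : C →ₗ[R] Z.M), ¬SplitMonoMap (X := mkA R C) (Y := Z) h →
      ∃ h' : E.M →ₗ[R] Z.M, h'.comp C.subtype = h := by
    intro Z h hh
    let N := LinearMap.range (C.subtype.prod (-h))
    let i : E.M →ₗ[R] ((E.M × Z.M) ⧸ N) := N.mkQ.comp (LinearMap.inl R E.M Z.M)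
    let j : Z.M →ₗ[R] ((E.M × Z.M) ⧸ N) := N.mkQ.comp (LinearMap.inr R E.M Z.M)
    have hij : ∀ c : C, i c = j (h c) := by
      intro c
      refine (Submodule.Quotient.eq N).2 ⟨c, ?_⟩
      simp
    let w : ((E.M × Z.M) ⧸ N) →ₗ[R] Y.M := N.liftQ (e.comp (LinearMap.fst R E.M Z.M)) (by
      rintro _ ⟨c, rfl⟩
      exact c.2)
    have hwi : ∀ x, w (i x) = e x := fun x => rfl
    have hwj : ∀ x, w (j x) = 0 := fun x => map_zero e
    by_cases hw : SplitEpiMap (X := mkA R ((E.M × Z.M) ⧸ N)) (Y := Y) w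
    · obtain ⟨s, hs⟩ := hw
      have hj : Function.Injective j := by
        rw [injective_iff_map_eq_zero]
        intro z hz
        obtain ⟨c, hc⟩ := (Submodule.Quotient.mk_eq_zero N).1 hz
        have h1 : (c : E.M) = 0 := congrArg Prod.fst hc
        have h2 : -h c = z := congrArg Prod.snd hc
        have h3 : c = 0 := Subtype.ext h1
        rw [← h2, h3]; simp
      have hk : LinearMap.range j = LinearMap.ker w := by
        apply le_antisymm
        · rintro _ ⟨z, rfl⟩; exact hwj z
        · intro t ht
          obtain ⟨⟨x, z⟩, rfl⟩ := N.mkQ_surjective t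
          have hx : e x = 0 := ht
          refine ⟨z + h ⟨x, hx⟩, ?_⟩
          refine ((Submodule.Quotient.eq N).2 ⟨⟨x, hx⟩, ?_⟩).symm
          simp
      obtain ⟨r, hr⟩ := retraction_of_section j w hj hk s hs
      refine ⟨r.comp i, LinearMap.ext fun c => ?_⟩
      have := LinearMap.congr_fun hr (h c)
      rw [LinearMap.comp_apply, ← hij] at this
      exact this
    · exfalso
      obtain ⟨ψ, hψ⟩ := he.2 (mkA R ((E.M × Z.M) ⧸ N)) w hw
      have hψ' : ∀ t, e (ψ t) = w t := LinearMap.congr_fun hψ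
      have hφ := hmin (ψ.comp i) (LinearMap.ext fun x => hψ' (i x))
      let φC : C →ₗ[R] C := (ψ.comp i).restrict (p := C) (q := C) (by
        intro x hx
        have : e (ψ (i x)) = e x := hψ' (i x)
        rw [LinearMap.mem_ker] at hx ⊢
        exact this.trans hx)
      have hφC : Function.Bijective φC := by
        apply IsArtinian.bijective_of_injective_endomorphism
        intro a b hab
        exact Subtype.ext (hφ.1 (congrArg Subtype.val hab))
      let θ : Z.M →ₗ[R] C := (ψ.comp j).codRestrict C fun z => (hψ' (j z)).trans (hwj z)
      obtain ⟨g, hg, -⟩ := inverse_of_bijective φC hφC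
      refine hh ⟨g.comp θ, LinearMap.ext fun c => ?_⟩
      refine Eq.trans ?_ (LinearMap.congr_fun hg c)
      refine congrArg g (Subtype.ext ?_)
      exact congrArg ψ (hij c).symm
  have hindec : IsIndecMod R C := by
    constructor
    · by_contra hn
      rw [not_nontrivial_iff_subsingleton] at hn
      have hi : Function.Injective e := by
        rw [← LinearMap.ker_eq_bot]
        exact (Submodule.subsingleton_iff_eq_bot).1 hn
      obtain ⟨g, -, hg⟩ := inverse_of_bijective e ⟨hi, hsurj⟩
      exact he.1 ⟨g, hg⟩
    · intro p hp
      have ns : ∀ p : Module.End R C, p * p = p → p ≠ 1 →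
          ¬SplitMonoMap (X := mkA R C) (Y := mkA R C) p := by
        rintro p hp hp1 ⟨r, hr⟩
        apply hp1
        have h1 : (r : Module.End R C) * p = 1 := hr
        calc p = (r * p) * p := by rw [h1, one_mul]
          _ = 1 := by rw [mul_assoc, hp, h1]
      by_contra hc
      push Not at hc
      have hp' : (1 - p) * (1 - p) = 1 - p := by rw [mul_sub, sub_mul, sub_mul, hp]; simp
      obtain ⟨a, ha⟩ := hla (mkA R C) p (ns p hp hc.2)
      obtain ⟨b, hb⟩ := hla (mkA R C) (1 - p) (ns _ hp' (by simpa using hc.1))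
      refine he.1 (section_of_retraction C.subtype e hsurj hex (a + b) ?_)
      rw [LinearMap.add_comp, ha, hb]
      exact add_sub_cancel p 1
  exact ⟨{ l := mkA R C, m := E, r := Y, f := C.subtype, g := e, inj := C.injective_subtype,
           surj := hsurj, exact := hex, not_split := he.1, l_indec := hindec, r_indec := hY,
           right_almost := he.2, left_almost := hla }, rfl⟩

theorem ass_left {X E₀ : ModA R} (hX : X.IsIndec) (f₀ : X.M →ₗ[R] E₀.M) (h₀ : LAS f₀)
    (Q : ModA R) (q : X.M →ₗ[R] Q.M) (hq : Function.Injective q) (hqs : ¬SplitMonoMap q) :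
    ∃ s : AlmostSplitSeq R, s.l = X := by
  obtain ⟨E, f, hf, hmin⟩ := exists_min_las f₀ h₀
  have hinj : Function.Injective f := by
    obtain ⟨q', hq'⟩ := hf.2 Q q hqs
    intro a b hab
    apply hq
    rw [← hq', LinearMap.comp_apply, LinearMap.comp_apply, hab]
  let N := LinearMap.range f
  let g : E.M →ₗ[R] (E.M ⧸ N) := N.mkQ
  have hgs : Function.Surjective g := N.mkQ_surjective
  have hex : LinearMap.range f = LinearMap.ker g := N.ker_mkQ.symm
  have hgf : ∀ x, g (f x) = 0 := fun x => by
    have : f x ∈ LinearMap.ker g := hex ▸ ⟨x, rfl⟩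
    exact this
  have hra : ∀ (Z : ModA R) (h : Z.M →ₗ[R] (E.M ⧸ N)),
      ¬SplitEpiMap (X := Z) (Y := mkA R (E.M ⧸ N)) h → ∃ h' : Z.M →ₗ[R] E.M, g.comp h' = h := by
    intro Z h hh
    let W : Submodule R (E.M × Z.M) := LinearMap.eqLocus (g.comp (LinearMap.fst R E.M Z.M))
      (h.comp (LinearMap.snd R E.M Z.M))
    let a : W →ₗ[R] E.M := (LinearMap.fst R E.M Z.M).comp W.subtype
    let b : W →ₗ[R] Z.M := (LinearMap.snd R E.M Z.M).comp W.subtype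
    have hab : ∀ t, g (a t) = h (b t) := fun t => t.2
    let k : X.M →ₗ[R] W := ((LinearMap.inl R E.M Z.M).comp f).codRestrict W (by
      intro x
      change g (f x) = h 0
      rw [hgf, map_zero])
    have hak : ∀ x, a (k x) = f x := fun x => rfl
    have hbk : ∀ x, b (k x) = 0 := fun x => rfl
    by_cases hk : SplitMonoMap (X := X) (Y := mkA R W) k
    · obtain ⟨r, hr⟩ := hk
      have hb : Function.Surjective b := by
        intro z
        obtain ⟨x, hx⟩ := hgs (h z)
        exact ⟨⟨(x, z), hx⟩, rfl⟩
      have hkb : LinearMap.range k = LinearMap.ker b := by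
        apply le_antisymm
        · rintro _ ⟨x, rfl⟩; exact hbk x
        · rintro ⟨⟨x, z⟩, hxz⟩ hz
          have hz : z = 0 := hz
          subst hz
          have hx : g x = 0 := (show g x = h 0 from hxz).trans (map_zero h)
          obtain ⟨y, rfl⟩ : x ∈ LinearMap.range f := by rw [hex]; exact hx
          exact ⟨y, rfl⟩
      obtain ⟨s, hs⟩ := section_of_retraction k b hb hkb r hr
      refine ⟨a.comp s, LinearMap.ext fun z => ?_⟩
      exact (hab (s z)).trans (congrArg h (LinearMap.congr_fun hs z))
    · exfalso
      obtain ⟨ψ, hψ⟩ := hf.2 (mkA R W) k hk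
      have hψ' : ∀ x, ψ (f x) = k x := LinearMap.congr_fun hψ
      have hφ := hmin (a.comp ψ) (LinearMap.ext fun x => congrArg a (hψ' x))
      obtain ⟨θ, hθ⟩ := descend g hgs (b.comp ψ) (by
        rw [← hex]
        rintro _ ⟨x, rfl⟩
        exact (congrArg b (hψ' x)).trans (hbk x))
      have hθ' : ∀ x, θ (g x) = b (ψ x) := LinearMap.congr_fun hθ
      have hs : Function.Surjective (h.comp θ : Module.End R (E.M ⧸ N)) := by
        intro y
        obtain ⟨x, rfl⟩ := hgs y
        obtain ⟨x', rfl⟩ := hφ.2 x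
        refine ⟨g x', ?_⟩
        exact (congrArg h (hθ' x')).trans (hab _).symm
      obtain ⟨v, -, hv⟩ := inverse_of_bijective (h.comp θ : Module.End R (E.M ⧸ N))
        ⟨IsNoetherian.injective_of_surjective_endomorphism _ hs, hs⟩
      exact hh ⟨θ.comp v, hv⟩
  have hns : ¬SplitEpiMap (X := E) (Y := mkA R (E.M ⧸ N)) g := by
    rintro ⟨s, hs⟩
    exact hf.1 (retraction_of_section f g hinj hex s hs)
  have hindec : IsIndecMod R (E.M ⧸ N) := by
    constructor
    · by_contra hn
      rw [not_nontrivial_iff_subsingleton] at hn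
      exact hns ⟨0, LinearMap.ext fun x => Subsingleton.elim _ _⟩
    · intro p hp
      have ns : ∀ p : Module.End R (E.M ⧸ N), p * p = p → p ≠ 1 →
          ¬SplitEpiMap (X := mkA R (E.M ⧸ N)) (Y := mkA R (E.M ⧸ N)) p := by
        rintro p hp hp1 ⟨r, hr⟩
        apply hp1
        have h1 : p * (r : Module.End R (E.M ⧸ N)) = 1 := hr
        calc p = p * (p * r) := by rw [h1, mul_one]
          _ = 1 := by rw [← mul_assoc, hp, h1]
      by_contra hc
      push Not at hc
      have hp' : (1 - p) * (1 - p) = 1 - p := by rw [mul_sub, sub_mul, sub_mul, hp]; simp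
      obtain ⟨a, ha⟩ := hra (mkA R (E.M ⧸ N)) p (ns p hp hc.2)
      obtain ⟨b, hb⟩ := hra (mkA R (E.M ⧸ N)) (1 - p) (ns _ hp' (by simpa using hc.1))
      refine hns ⟨a + b, ?_⟩
      rw [LinearMap.comp_add, ha, hb]
      exact add_sub_cancel p 1
  exact ⟨{ l := X, m := E, r := mkA R (E.M ⧸ N), f := f, g := g, inj := hinj,
           surj := hgs, exact := hex, not_split := hns, l_indec := hX, r_indec := hindec,
           right_almost := hra, left_almost := hf.2 }, rfl⟩

/-- lifting along surjections when every surjection onto `P` splits -/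
theorem lift_of_split {P X Y : ModA R}
    (hP : ∀ (Q : ModA R) (q : Q.M →ₗ[R] P.M), Function.Surjective q → SplitEpiMap q)
    (g : X.M →ₗ[R] Y.M) (hg : Function.Surjective g) (w : P.M →ₗ[R] Y.M) :
    ∃ w' : P.M →ₗ[R] X.M, g.comp w' = w := by
  let W : Submodule R (X.M × P.M) := LinearMap.eqLocus (g.comp (LinearMap.fst R X.M P.M))
      (w.comp (LinearMap.snd R X.M P.M))
  let a : W →ₗ[R] X.M := (LinearMap.fst R X.M P.M).comp W.subtype
  let b : W →ₗ[R] P.M := (LinearMap.snd R X.M P.M).comp W.subtype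
  have hab : ∀ t, g (a t) = w (b t) := fun t => t.2
  obtain ⟨s, hs⟩ := hP (mkA R W) b (by
    intro z
    obtain ⟨x, hx⟩ := hg (w z)
    exact ⟨⟨(x, z), hx⟩, rfl⟩)
  refine ⟨a.comp s, LinearMap.ext fun z => ?_⟩
  exact (hab (s z)).trans (congrArg w (LinearMap.congr_fun hs z))

/-- extension along injections when every injection from `I` splits -/
theorem extend_of_split {I X Y : ModA R}
    (hI : ∀ (Q : ModA R) (q : I.M →ₗ[R] Q.M), Function.Injective q → SplitMonoMap q)
    (g : X.M →ₗ[R] Y.M) (hg : Function.Injective g) (w : X.M →ₗ[R] I.M) :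
    ∃ w' : Y.M →ₗ[R] I.M, w'.comp g = w := by
  let N := LinearMap.range (g.prod (-w))
  let i : Y.M →ₗ[R] ((Y.M × I.M) ⧸ N) := N.mkQ.comp (LinearMap.inl R Y.M I.M)
  let j : I.M →ₗ[R] ((Y.M × I.M) ⧸ N) := N.mkQ.comp (LinearMap.inr R Y.M I.M)
  have hij : ∀ c, i (g c) = j (w c) := by
    intro c
    refine (Submodule.Quotient.eq N).2 ⟨c, ?_⟩
    simp
  obtain ⟨r, hr⟩ := hI (mkA R ((Y.M × I.M) ⧸ N)) j (by
    rw [injective_iff_map_eq_zero]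
    intro z hz
    obtain ⟨c, hc⟩ := (Submodule.Quotient.mk_eq_zero N).1 hz
    have h1 : g c = 0 := congrArg Prod.fst hc
    have h2 : -w c = z := congrArg Prod.snd hc
    have h3 : c = 0 := hg (h1.trans (map_zero g).symm)
    rw [← h2, h3]; simp)
  refine ⟨r.comp i, LinearMap.ext fun c => ?_⟩
  have := LinearMap.congr_fun hr (w c)
  rw [LinearMap.comp_apply, ← hij] at this
  exact this

theorem irred_mono_or_epi {X Y : ModA R} (g : X.M →ₗ[R] Y.M) (hg : IsIrred g) :
    Function.Injective g ∨ Function.Surjective g := by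
  rcases hg.2.2 (mkA R (LinearMap.range g)) g.rangeRestrict (LinearMap.range g).subtype rfl with
    ⟨r, hr⟩ | ⟨s, hs⟩
  · left
    intro a b hab
    have h1 := LinearMap.congr_fun hr a
    have h2 := LinearMap.congr_fun hr b
    have h3 : g.rangeRestrict a = g.rangeRestrict b := Subtype.ext hab
    exact h1.symm.trans ((congrArg r h3).trans h2)
  · right
    intro y
    have h1 : ((s y : LinearMap.range g) : Y.M) = y := LinearMap.congr_fun hs y
    obtain ⟨x, hx⟩ := (s y).2
    exact ⟨x, hx.trans h1⟩

open CategoryTheory in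
/-- The key lemma, given the existence of almost split maps. -/
theorem reach_back
    (hR : ∀ Y : ModA R, Y.IsIndec → ∃ (E : ModA R) (e : E.M →ₗ[R] Y.M), RAS e)
    (hL : ∀ X : ModA R, X.IsIndec → ∃ (E : ModA R) (f : X.M →ₗ[R] E.M), LAS f)
    {X Y : IndecModA R} (hXY : ARAbs.Arrow X Y) (hX : Relation.TransGen ARAbs.Arrow X X)
    (hY : Relation.TransGen ARAbs.Arrow Y Y) : ARAbs.Reach Y X := by
  obtain ⟨g, hg⟩ := hXY
  rcases irred_mono_or_epi (X := X.1) (Y := Y.1) (lin g) (isIrred_of_irr g hg) with hi | hs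
  · refine ARAbs.main_left locNil g hg hX fun I => ?_
    by_cases hI : ∀ (Q : ModA R) (q : I.1.M →ₗ[R] Q.M), Function.Injective q → SplitMonoMap q
    · right
      intro w
      obtain ⟨w', hw'⟩ := extend_of_split hI (lin g) hi (lin w)
      exact ⟨hom w', hw'⟩
    · left
      push Not at hI
      obtain ⟨Q, q, hq, hqs⟩ := hI
      obtain ⟨E, f, hf⟩ := hL I.1 I.2
      obtain ⟨s, hs⟩ := ass_left I.2 f hf Q q hq hqs
      have : mkI s.l s.l_indec = I := Subtype.ext hs
      exact ⟨mkI s.r s.r_indec, this ▸ triple s⟩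
  · refine ARAbs.main_right locNil g hg hY fun P => ?_
    by_cases hP : ∀ (Q : ModA R) (q : Q.M →ₗ[R] P.1.M), Function.Surjective q → SplitEpiMap q
    · right
      intro w
      obtain ⟨w', hw'⟩ := lift_of_split hP (lin g) hs (lin w)
      exact ⟨hom w', hw'⟩
    · left
      push Not at hP
      obtain ⟨Q, q, hq, hqs⟩ := hP
      obtain ⟨E, f, hf⟩ := hR P.1 P.2
      obtain ⟨s, hs⟩ := ass_right P.2 f hf Q q hq hqs
      have : mkI s.r s.r_indec = P := Subtype.ext hs
      exact ⟨mkI s.l s.l_indec, this ▸ triple s⟩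

end ARMod


namespace ARDual

section Socle
variable {K : Type*} [CommRing K]

/-- Every simple module occurs at most once in the socle. -/
def SocSmall (K : Type*) [CommRing K] (E : Type*) [AddCommGroup E] [Module K E] : Prop :=
  ∀ m : Ideal K, m.IsMaximal → ∀ x y : E, (∀ a ∈ m, a • x = 0) → (∀ a ∈ m, a • y = 0) →
    x ≠ 0 → ∃ r : K, r • x = y

theorem length_hom_simple {E : Type*} [AddCommGroup E] [Module K E] (hE : SocSmall K E)
    (S : Type*) [AddCommGroup S] [Module K S] [IsSimpleModule K S] :
    Module.length K (S →ₗ[K] E) ≤ 1 := by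
  obtain ⟨s, hs⟩ := @exists_ne _ (IsSimpleModule.nontrivial K S) (0 : S)
  have hm : Ideal.IsMaximal (LinearMap.ker (LinearMap.toSpanSingleton K S s)) :=
    IsSimpleModule.ker_toSpanSingleton_isMaximal K hs
  have hgen : ∀ t : S, ∃ a : K, a • s = t := IsSimpleModule.toSpanSingleton_surjective K hs
  rcases subsingleton_or_nontrivial (S →ₗ[K] E) with h | h
  · rw [Module.length_eq_zero]; exact zero_le
  have : IsSimpleModule K (S →ₗ[K] E) := by
    rw [isSimpleModule_iff_toSpanSingleton_surjective]
    refine ⟨h, fun φ hφ ψ => ?_⟩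
    have h1 : φ s ≠ 0 := by
      intro h0
      apply hφ
      ext t
      obtain ⟨a, rfl⟩ := hgen t
      simp [h0]
    have kill : ∀ χ : S →ₗ[K] E, ∀ a ∈ LinearMap.ker (LinearMap.toSpanSingleton K S s),
        a • χ s = 0 := by
      intro χ a ha
      rw [← map_smul, show a • s = 0 from ha, map_zero]
    obtain ⟨r, hr⟩ := hE _ hm (φ s) (ψ s) (kill φ) (kill ψ) h1
    refine ⟨r, ?_⟩
    ext t
    obtain ⟨a, rfl⟩ := hgen t
    change r • φ (a • s) = ψ (a • s)
    rw [map_smul, map_smul, ← hr, smul_comm]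
  exact (Module.length_eq_one K _).le

theorem length_hom_le {E : Type*} [AddCommGroup E] [Module K E] (hE : SocSmall K E)
    (M : Type*) [AddCommGroup M] [Module K M] (hM : IsFiniteLength K M) :
    Module.length K (M →ₗ[K] E) ≤ Module.length K M := by
  induction hM with
  | @of_subsingleton M _ _ _ => 
    have : Subsingleton (M →ₗ[K] E) := ⟨fun f g => LinearMap.ext fun x => by
      rw [Subsingleton.elim x 0, map_zero, map_zero]⟩
    rw [Module.length_eq_zero]; exact zero_le
  | @of_simple_quotient M _ _ N _ _ ih =>
    let res : (M →ₗ[K] E) →ₗ[K] (N →ₗ[K] E) := LinearMap.lcomp K E N.subtype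
    let inf : ((M ⧸ N) →ₗ[K] E) →ₗ[K] (M →ₗ[K] E) := LinearMap.lcomp K E N.mkQ
    have hinf : Function.Injective inf := by
      intro f g hfg
      ext x
      exact LinearMap.congr_fun hfg x
    have hex : Function.Exact inf res.rangeRestrict := by
      intro f
      constructor
      · intro hf
        have hf' : res f = 0 := congrArg Subtype.val hf
        refine ⟨N.liftQ f fun n hn => LinearMap.congr_fun hf' ⟨n, hn⟩, ?_⟩
        ext x; rfl
      · rintro ⟨g, rfl⟩
        refine Subtype.ext (LinearMap.ext fun n => ?_)
        change g (N.mkQ n) = 0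
        have : N.mkQ n = 0 := by simp
        rw [this, map_zero]
    rw [Module.length_eq_add_of_exact inf res.rangeRestrict hinf
        res.surjective_rangeRestrict hex,
      Module.length_eq_add_of_exact N.subtype N.mkQ N.injective_subtype N.mkQ_surjective
        (LinearMap.exact_subtype_mkQ N), Module.length_eq_one K (M ⧸ N), add_comm]
    refine add_le_add ?_ (length_hom_simple hE _)
    exact (Module.length_le_of_injective (LinearMap.range res).subtype
      (Submodule.injective_subtype _)).trans ih

theorem length_le_ring [IsArtinianRing K] {E : Type*} [AddCommGroup E] [Module K E]
    (hE : SocSmall K E) : Module.length K E ≤ Module.length K K := by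
  rw [← (LinearMap.ringLmapEquivSelf K K E).length_eq]
  exact length_hom_le hE K (isFiniteLength_iff_isNoetherian_isArtinian.2 ⟨inferInstance, inferInstance⟩)
end Socle

/-- An injective cogenerator with small socle. -/
structure IsCogen (K : Type u) [CommRing K] (E : Type u) [AddCommGroup E] [Module K E] : Prop where
  small : SocSmall K E
  inj : Module.Injective K E
  has : ∀ m : Ideal K, m.IsMaximal → ∃ x : E, x ≠ 0 ∧ ∀ a ∈ m, a • x = 0

theorem exists_cogen (K : Type u) [CommRing K] [IsArtinianRing K] :
    ∃ (E : Type u) (_ : AddCommGroup E) (_ : Module K E), IsCogen K E := by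
  let P : Set ℕ := {n | ∃ (E : Type u) (_ : AddCommGroup E) (_ : Module K E), SocSmall K E ∧
    Module.length K E = n}
  have hKtop : Module.length K K ≠ ⊤ := Module.length_ne_top
  obtain ⟨N, hN⟩ := ENat.ne_top_iff_exists.1 hKtop
  have hb : BddAbove P := by
    refine ⟨N, ?_⟩
    rintro n ⟨E, _, _, hE, hn⟩
    have := length_le_ring hE
    rw [hn, ← hN] at this
    exact_mod_cast this
  have hne : P.Nonempty := by
    refine ⟨0, PUnit, inferInstance, inferInstance, ?_, ?_⟩
    · intro m _ x y _ _ hx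
      exact absurd (Subsingleton.elim _ _) hx
    · rw [Module.length_eq_zero]; rfl
  obtain ⟨E, _, _, hE, hlen⟩ := Nat.sSup_mem hne hb
  have hmax : ∀ (F : Type u) [AddCommGroup F] [Module K F], SocSmall K F →
      Module.length K F ≤ Module.length K E := by
    intro F _ _ hF
    have h1 : Module.length K F ≠ ⊤ := by
      intro h
      have := length_le_ring hF
      rw [h] at this
      exact hKtop (top_le_iff.1 this)
    obtain ⟨n, hn⟩ := ENat.ne_top_iff_exists.1 h1
    rw [← hn, hlen]
    exact_mod_cast le_csSup hb (show n ∈ P from ⟨F, inferInstance, inferInstance, hF, hn.symm⟩)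
  have hEfin : IsFiniteLength K E := by
    rw [← Module.length_ne_top_iff, hlen]; exact ENat.coe_ne_top _
  obtain ⟨_, _⟩ := isFiniteLength_iff_isNoetherian_isArtinian.1 hEfin
  refine ⟨E, inferInstance, inferInstance, hE, ?_, ?_⟩
  · apply Module.Baer.injective
    intro I g
    let N := LinearMap.range (g.prod (-I.subtype))
    let i : E →ₗ[K] ((E × K) ⧸ N) := N.mkQ.comp (LinearMap.inl K E K)
    let j : K →ₗ[K] ((E × K) ⧸ N) := N.mkQ.comp (LinearMap.inr K E K)
    have hij : ∀ c : I, i (g c) = j c := by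
      intro c
      refine (Submodule.Quotient.eq N).2 ⟨c, ?_⟩
      simp
    have hi : ∀ x, i x = 0 → x = 0 := by
      intro x hx
      obtain ⟨c, hc⟩ := (Submodule.Quotient.mk_eq_zero N).1 hx
      have h1 : g c = x := congrArg Prod.fst hc
      have h2 : -(c : K) = 0 := congrArg Prod.snd hc
      have h3 : c = 0 := Subtype.ext (neg_eq_zero.1 h2)
      rw [← h1, h3, map_zero]
    obtain ⟨C, hC, hCmax⟩ := set_has_maximal_iff_noetherian.2
      (inferInstance : IsNoetherian K ((E × K) ⧸ N))
      {C | Disjoint C (LinearMap.range i)} ⟨⊥, disjoint_bot_left⟩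
    let k : E →ₗ[K] (((E × K) ⧸ N) ⧸ C) := C.mkQ.comp i
    have hkinj : Function.Injective k := by
      rw [injective_iff_map_eq_zero]
      intro x hx
      have h1 : i x ∈ C := (Submodule.Quotient.mk_eq_zero C).1 hx
      exact hi x (Submodule.disjoint_def.1 hC _ h1 ⟨x, rfl⟩)
    have hess : ∀ t, t ≠ 0 → ∃ (r : K) (x : E), r • t = k x ∧ r • t ≠ 0 := by
      intro t ht
      obtain ⟨t, rfl⟩ := C.mkQ_surjective t
      have hnC : t ∉ C := fun h => ht ((Submodule.Quotient.mk_eq_zero C).2 h)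
      have hlt : C < C ⊔ Submodule.span K {t} := by
        refine lt_of_le_of_ne le_sup_left fun h => hnC ?_
        rw [h]
        exact Submodule.mem_sup_right (Submodule.mem_span_singleton_self t)
      have hnd : ¬Disjoint (C ⊔ Submodule.span K {t}) (LinearMap.range i) :=
        fun h => hCmax _ h hlt
      rw [Submodule.disjoint_def] at hnd
      push Not at hnd
      obtain ⟨_, hy, ⟨x, rfl⟩, hx0⟩ := hnd
      obtain ⟨c, hc, z, hz, hcz⟩ := Submodule.mem_sup.1 hy
      obtain ⟨r, rfl⟩ := Submodule.mem_span_singleton.1 hz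
      have hk : r • C.mkQ t = k x := by
        rw [← map_smul]
        refine (Submodule.Quotient.eq C).2 ?_
        rw [← hcz, sub_add_cancel_right]
        exact C.neg_mem hc
      refine ⟨r, x, hk, ?_⟩
      rw [hk]
      intro h0
      apply hx0
      rw [hkinj (h0.trans (map_zero k).symm), map_zero]
    have hsm : SocSmall K (((E × K) ⧸ N) ⧸ C) := by
      have key : ∀ m : Ideal K, m.IsMaximal → ∀ t : (((E × K) ⧸ N) ⧸ C), (∀ a ∈ m, a • t = 0) →
          ∃ x, k x = t := by
        intro m hm t ht
        by_cases h0 : t = 0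
        · exact ⟨0, by rw [map_zero, h0]⟩
        obtain ⟨r, x, hx, hr⟩ := hess t h0
        have hrm : r ∉ m := fun h => hr (ht r h)
        obtain ⟨s, hs⟩ := hm.exists_inv hrm
        obtain ⟨b, hb, hsb⟩ := hs
        refine ⟨s • x, ?_⟩
        rw [map_smul, ← hx, smul_smul]
        have : t = (s * r + b) • t := by rw [hsb, one_smul]
        rw [add_smul, ht b hb, add_zero] at this
        exact this.symm
      intro m hm t t' ht ht' h0
      obtain ⟨x, rfl⟩ := key m hm t ht
      obtain ⟨y, rfl⟩ := key m hm t' ht'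
      obtain ⟨r, hr⟩ := hE m hm x y
        (fun a ha => hkinj (by rw [map_smul, ht a ha, map_zero]))
        (fun a ha => hkinj (by rw [map_smul, ht' a ha, map_zero]))
        (fun h => h0 (by rw [h, map_zero]))
      exact ⟨r, by rw [← map_smul, hr]⟩
    have hksurj : Function.Surjective k := by
      rw [← LinearMap.range_eq_top]
      by_contra hne
      have h1 := Submodule.length_lt hne
      rw [← (LinearEquiv.ofInjective k hkinj).length_eq] at h1
      exact absurd (hmax _ hsm) (not_le.2 h1)
    let v := (LinearEquiv.ofBijective k ⟨hkinj, hksurj⟩).symm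
    refine ⟨v.toLinearMap.comp (C.mkQ.comp j), fun x hx => ?_⟩
    change v (C.mkQ (j x)) = _
    rw [LinearEquiv.symm_apply_eq]
    exact congrArg C.mkQ (hij ⟨x, hx⟩).symm
  · intro m hm
    by_contra hcon
    push Not at hcon
    have hsm : SocSmall K (E × (K ⧸ m)) := by
      rintro m' hm' ⟨x, x'⟩ ⟨y, y'⟩ hx hy h0
      have hx1 : ∀ a ∈ m', a • x = 0 := fun a ha => congrArg Prod.fst (hx a ha)
      have hx2 : ∀ a ∈ m', a • x' = 0 := fun a ha => congrArg Prod.snd (hx a ha)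
      have hy1 : ∀ a ∈ m', a • y = 0 := fun a ha => congrArg Prod.fst (hy a ha)
      have hy2 : ∀ a ∈ m', a • y' = 0 := fun a ha => congrArg Prod.snd (hy a ha)
      by_cases hmm : m' = m
      · subst hmm
        have z : ∀ x : E, (∀ a ∈ m', a • x = 0) → x = 0 := by
          intro x hx
          by_contra h
          obtain ⟨a, ha, ha'⟩ := hcon x h
          exact ha' (hx a ha)
        have hx0 := z x hx1
        have hy0 := z y hy1
        subst hx0 hy0
        have hx' : x' ≠ 0 := fun h => h0 (by rw [h]; rfl)
        obtain ⟨b, rfl⟩ := Ideal.Quotient.mk_surjective x'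
        obtain ⟨c, rfl⟩ := Ideal.Quotient.mk_surjective y'
        have hb : b ∉ m' := fun h => hx' (Ideal.Quotient.eq_zero_iff_mem.2 h)
        obtain ⟨s, d, hd, hsd⟩ := hm'.exists_inv hb
        refine ⟨c * s, Prod.ext (smul_zero _) ?_⟩
        change Ideal.Quotient.mk m' ((c * s) * b) = Ideal.Quotient.mk m' c
        rw [Ideal.Quotient.eq]
        have : c * s * b - c = -(c * d) := by
          linear_combination c * hsd
        rw [this]
        exact m'.neg_mem (m'.mul_mem_left _ hd)
      · have z : ∀ x' : K ⧸ m, (∀ a ∈ m', a • x' = 0) → x' = 0 := by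
          intro x' hx'
          obtain ⟨a, ha, ham⟩ : ∃ a ∈ m', a ∉ m := by
            by_contra hc
            push Not at hc
            exact hmm (hm'.eq_of_le hm.ne_top hc)
          obtain ⟨s, d, hd, hsd⟩ := hm.exists_inv ham
          obtain ⟨b, rfl⟩ := Ideal.Quotient.mk_surjective x'
          have h1 := hx' a ha
          change Ideal.Quotient.mk m (a * b) = 0 at h1
          rw [Ideal.Quotient.eq_zero_iff_mem] at h1 ⊢
          have : b = s * (a * b) + d * b := by linear_combination -b * hsd
          rw [this]
          exact m.add_mem (m.mul_mem_left _ h1) (m.mul_mem_right _ hd)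
        have hx0 := z x' hx2
        have hy0 := z y' hy2
        subst hx0 hy0
        obtain ⟨r, hr⟩ := hE m' hm' x y hx1 hy1 (fun h => h0 (by rw [h]; rfl))
        exact ⟨r, Prod.ext hr (smul_zero _)⟩
    have h1 := hmax _ hsm
    rw [Module.length_prod] at h1
    have : 0 < Module.length K (K ⧸ m) := by
      rw [Module.length_pos_iff]
      exact Ideal.Quotient.nontrivial_iff.2 hm.ne_top
    rw [hlen] at h1
    have h2 : ((sSup P : ℕ) : ℕ∞) + 1 ≤ (sSup P : ℕ) :=
      le_trans (add_le_add le_rfl (Order.one_le_iff_pos.2 this)) h1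
    have h3 : sSup P + 1 ≤ sSup P := by exact_mod_cast h2
    omega

section Duality
variable {K : Type u} [CommRing K] {E : Type u} [AddCommGroup E] [Module K E] (hE : IsCogen K E)
include hE

theorem IsCogen.extend {A B : Type u} [AddCommGroup A] [AddCommGroup B] [Module K A] [Module K B]
    (f : A →ₗ[K] B) (hf : Function.Injective f) (g : A →ₗ[K] E) :
    ∃ h : B →ₗ[K] E, ∀ x, h (f x) = g x := hE.inj.out f hf g

theorem IsCogen.separates {M : Type u} [AddCommGroup M] [Module K M] (x : M) (hx : x ≠ 0) :
    ∃ φ : M →ₗ[K] E, φ x ≠ 0 := by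
  let t := LinearMap.toSpanSingleton K M x
  have hI : (LinearMap.ker t : Ideal K) ≠ ⊤ := by
    intro h
    have : (1 : K) ∈ LinearMap.ker t := by rw [h]; trivial
    apply hx
    have h1 : (1 : K) • x = 0 := this
    simpa using h1
  obtain ⟨m, hm, hle⟩ := Ideal.exists_le_maximal _ hI
  obtain ⟨e, he, hme⟩ := hE.has m hm
  obtain ⟨h, hh⟩ := hE.extend ((LinearMap.ker t).liftQ t le_rfl)
    (LinearMap.ker_eq_bot.1 (Submodule.ker_liftQ_eq_bot _ _ _ le_rfl))
    ((LinearMap.ker t).liftQ (LinearMap.toSpanSingleton K E e) fun a ha => hme a (hle ha))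
  refine ⟨h, ?_⟩
  have h1 : h (t 1) = (LinearMap.toSpanSingleton K E e) 1 := hh (Submodule.Quotient.mk 1)
  have h2 : h x = e := by simpa [t] using h1
  rw [h2]
  exact he

/-- A functional vanishing on a submodule but not on a given element outside. -/
theorem IsCogen.separates_sub {M : Type u} [AddCommGroup M] [Module K M] (N : Submodule K M)
    (x : M) (hx : x ∉ N) : ∃ φ : M →ₗ[K] E, (∀ n ∈ N, φ n = 0) ∧ φ x ≠ 0 := by
  obtain ⟨φ, hφ⟩ := hE.separates (N.mkQ x) (fun h => hx ((Submodule.Quotient.mk_eq_zero N).1 h))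
  refine ⟨φ.comp N.mkQ, fun n hn => ?_, hφ⟩
  rw [LinearMap.comp_apply, show N.mkQ n = 0 from (Submodule.Quotient.mk_eq_zero N).2 hn, map_zero]

theorem IsCogen.dual_fin {M : Type u} [AddCommGroup M] [Module K M] (hM : IsFiniteLength K M) :
    IsFiniteLength K (M →ₗ[K] E) := by
  rw [← Module.length_ne_top_iff] at hM ⊢
  intro h
  have := length_hom_le hE.small M (Module.length_ne_top_iff.1 hM)
  rw [h] at this
  exact hM (top_le_iff.1 this)

theorem IsCogen.bidual {M : Type u} [AddCommGroup M] [Module K M] (hM : IsFiniteLength K M)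
    (F : (M →ₗ[K] E) →ₗ[K] E) : ∃ x : M, ∀ φ, F φ = φ x := by
  let ev : M →ₗ[K] ((M →ₗ[K] E) →ₗ[K] E) := LinearMap.applyₗ
  have hev : Function.Injective ev := by
    rw [injective_iff_map_eq_zero]
    intro x hx
    by_contra h
    obtain ⟨φ, hφ⟩ := hE.separates x h
    exact hφ (LinearMap.congr_fun hx φ)
  have hD := hE.dual_fin hM
  have hDD := hE.dual_fin hD
  obtain ⟨_, _⟩ := isFiniteLength_iff_isNoetherian_isArtinian.1 hDD
  have hr : LinearMap.range ev = ⊤ := by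
    by_contra hne
    have h1 := Submodule.length_lt hne
    rw [← (LinearEquiv.ofInjective ev hev).length_eq] at h1
    exact absurd ((length_hom_le hE.small _ hD).trans (length_hom_le hE.small _ hM)) (not_le.2 h1)
  obtain ⟨x, hx⟩ := LinearMap.range_eq_top.1 hr F
  exact ⟨x, fun φ => by rw [← hx]; rfl⟩

end Duality

end ARDual


namespace ARExist
open ARMod ARDual

section
variable {K R : Type u} [CommRing K] [IsArtinianRing K] [Ring R] [Algebra K R] [Module.Finite K R]
  {E : Type u} [AddCommGroup E] [Module K E] (hE : IsCogen K E)

omit [IsArtinianRing K] [Module.Finite K R] in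
include hE in
/-- A functional on the endomorphism ring detecting the identity and killing the nonunits. -/
theorem exists_xi {M : Type u} [AddCommGroup M] [Module R M] [Module K M] [IsScalarTower K R M]
    [IsNoetherian R M] [IsArtinian R M] (hM : IsIndecMod R M) :
    ∃ ξ : Module.End R M →ₗ[K] E, ξ 1 ≠ 0 ∧ ∀ f : Module.End R M, ¬Function.Bijective f → ξ f = 0 := by
  have hnt : Nontrivial M := hM.1
  let N : Submodule K (Module.End R M) :=
    { carrier := {f | ¬Function.Bijective f}
      zero_mem' := by
        intro h
        obtain ⟨x, hx⟩ := exists_ne (0 : M)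
        exact hx (h.1 rfl)
      add_mem' := by
        intro f g hf hg h
        exact (local_add hM f g h).elim hf hg
      smul_mem' := by
        intro c f hf h
        apply hf
        refine IsArtinian.bijective_of_injective_endomorphism f ?_
        intro x y hxy
        apply h.1
        change c • f x = c • f y
        rw [hxy] }
  obtain ⟨ξ, h1, h2⟩ := hE.separates_sub N 1 (fun h => h Function.bijective_id)
  exact ⟨ξ, h2, fun f hf => h1 f hf⟩

/-- The right multiplication action of `R` on the dual of `R^m`. -/
abbrev dualModule (K R E : Type u) [CommRing K] [Ring R] [Algebra K R]
    [AddCommGroup E] [Module K E] (m : ℕ) : Module R ((Fin m → R) →ₗ[K] E) where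
  smul s ψ := { toFun := fun v => ψ (fun j => v j * s)
                map_add' := fun v w => by
                  rw [← map_add]; congr 1; ext j; simp [add_mul]
                map_smul' := fun c v => by
                  rw [RingHom.id_apply, ← map_smul]; congr 1; ext j; simp }
  one_smul ψ := LinearMap.ext fun v => congrArg ψ (funext fun j => mul_one _)
  mul_smul s t ψ := LinearMap.ext fun v => congrArg ψ (funext fun j => (mul_assoc _ _ _).symm)
  smul_zero s := rfl
  smul_add s ψ χ := rfl
  add_smul s t ψ := LinearMap.ext fun v => by
    change ψ _ = ψ _ + ψ _
    rw [← map_add]; congr 1; ext j; simp [mul_add]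
  zero_smul ψ := LinearMap.ext fun v => by
    change ψ _ = 0
    rw [← map_zero ψ]; congr 1; ext j; simp

/-- K-scalar structure on an `R`-module. -/
abbrev kmod (K : Type u) {R : Type u} [CommRing K] [Ring R] [Algebra K R] (M : Type u)
    [AddCommGroup M] [Module R M] : Module K M := Module.compHom M (algebraMap K R)

include hE

theorem exists_ras (Y : ModA R) (hY : Y.IsIndec) :
    ∃ (F : ModA R) (e : F.M →ₗ[R] Y.M), RAS e := by
  let _i : Module K Y.M := kmod K (R := R) Y.M
  have : IsScalarTower K R Y.M := IsScalarTower.of_algebraMap_smul fun _ _ => rfl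
  have : IsNoetherian K R := inferInstance
  have : IsArtinian K R := inferInstance
  have : IsNoetherian R R := isNoetherian_of_tower K inferInstance
  obtain ⟨ξ, hξ1, hξ⟩ := exists_xi (K := K) hE (M := Y.M) hY
  obtain ⟨n, y, hy⟩ := Module.Finite.exists_fin (R := R) (M := Y.M)
  -- evaluation
  let ev : Module.End R Y.M →ₗ[K] (Fin n → Y.M) :=
    { toFun := fun u i => u (y i), map_add' := fun _ _ => rfl, map_smul' := fun _ _ => rfl }
  have hev : Function.Injective ev := by
    intro u v huv
    exact LinearMap.ext_on_range hy fun i => congrFun huv i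
  obtain ⟨Φ, hΦ⟩ := hE.extend ev hev ξ
  have hπs : ∀ x : Y.M, ∃ r : Fin n → R, Fintype.linearCombination R y r = x := by
    intro x
    have : x ∈ Submodule.span R (Set.range y) := by rw [hy]; trivial
    rw [← Fintype.range_linearCombination] at this
    exact this
  let S := LinearMap.ker (Fintype.linearCombination R y)
  obtain ⟨m, a', ha'⟩ := Module.Finite.exists_fin (R := R) (M := S)
  let a : Fin m → Fin n → R := fun j => (a' j).1
  have haS : ∀ j, ∑ i, a j i • y i = 0 := fun j => by
    have := (a' j).2
    rw [LinearMap.mem_ker, Fintype.linearCombination_apply] at this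
    exact this
  let _i := dualModule K R E m
  let D := (Fin m → R) →ₗ[K] E
  have : IsScalarTower K R D := ⟨fun k r ψ => LinearMap.ext fun v => by
    change ψ _ = k • ψ _
    rw [← map_smul]; congr 1; ext j; simp⟩
  have hD : IsFiniteLength K D := hE.dual_fin
    (isFiniteLength_iff_isNoetherian_isArtinian.2 ⟨inferInstance, inferInstance⟩)
  have : IsNoetherian K D := (isFiniteLength_iff_isNoetherian_isArtinian.1 hD).1
  have : IsArtinian K D := (isFiniteLength_iff_isNoetherian_isArtinian.1 hD).2
  have : IsNoetherian R D := isNoetherian_of_tower K inferInstance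
  have : IsArtinian R D := isArtinian_of_tower K inferInstance
  let F : Submodule R (Y.M × D) :=
    { carrier := {p | ∀ r : Fin n → R,
        Φ (fun i => r i • p.1) = p.2 (fun j => ∑ i, a j i * r i)}
      zero_mem' := fun r => by
        change Φ (fun i => r i • (0 : Y.M)) = 0
        simp only [smul_zero]; exact map_zero Φ
      add_mem' := by
        intro p q hp hq r
        change Φ (fun i => r i • (p.1 + q.1)) = p.2 _ + q.2 _
        rw [← hp r, ← hq r, ← map_add]
        congr 1; ext i; simp
      smul_mem' := by
        intro s p hp r
        change Φ (fun i => r i • (s • p.1)) = p.2 (fun j => (∑ i, a j i * r i) * s)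
        have := hp (fun i => r i * s)
        simp only [mul_smul] at this
        rw [this]
        congr 1; ext j; rw [Finset.sum_mul]; simp only [mul_assoc] }
  refine ⟨mkA R F, (LinearMap.fst R Y.M D).comp F.subtype, ?_, ?_⟩
  · rintro ⟨s, hs⟩
    apply hξ1
    have hs1 : ∀ x, (s x).1.1 = x := fun x => LinearMap.congr_fun hs x
    let Ψ : Y.M →ₗ[R] D := (LinearMap.snd R Y.M D).comp (F.subtype.comp s)
    have hΨ : ∀ x (r : Fin n → R), Φ (fun i => r i • x) = Ψ x (fun j => ∑ i, a j i * r i) := by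
      intro x r
      have := (s x).2 r
      rw [hs1] at this
      exact this
    rw [← hΦ 1]
    have e1 : ev 1 = ∑ i, (fun i' => (Pi.single i (1 : R) : Fin n → R) i' • y i) := by
      ext i'
      rw [Finset.sum_apply, Finset.sum_eq_single i']
      · simp [ev]
      · intro b _ hb; simp [hb.symm]
      · intro h; exact absurd (Finset.mem_univ _) h
    rw [e1, map_sum]
    have e2 : ∀ i, Φ (fun i' => (Pi.single i (1 : R) : Fin n → R) i' • y i)
        = ∑ j, Ψ (a j i • y i) (Pi.single j 1) := by
      intro i
      rw [hΨ]
      have : (fun j => ∑ i', a j i' * (Pi.single i (1 : R) : Fin n → R) i')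
          = ∑ j, fun j' => (Pi.single j (1 : R) : Fin m → R) j' * a j i := by
        ext j
        rw [Finset.sum_apply, Finset.sum_eq_single i, Finset.sum_eq_single j]
        · simp
        · intro b _ hb; simp [hb.symm]
        · intro h; exact absurd (Finset.mem_univ _) h
        · intro b _ hb; simp [hb]
        · intro h; exact absurd (Finset.mem_univ _) h
      rw [this, map_sum]
      refine Finset.sum_congr rfl fun j _ => ?_
      rw [map_smul]
      rfl
    rw [Finset.sum_congr rfl fun i _ => e2 i, Finset.sum_comm]
    refine Finset.sum_eq_zero fun j _ => ?_
    rw [← LinearMap.sum_apply, ← map_sum, haS, map_zero, LinearMap.zero_apply]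
  · intro Z h hh
    let _i : Module K Z.M := kmod K (R := R) Z.M
    have : IsScalarTower K R Z.M := IsScalarTower.of_algebraMap_smul fun _ _ => rfl
    have hk : ∀ (c : K) (z : Z.M), h (c • z) = c • h z := fun c z => map_smul h (algebraMap K R c) z
    let L : (Fin n → Z.M) →ₗ[K] (Fin m → Z.M) :=
      { toFun := fun z j => ∑ i, a j i • z i
        map_add' := fun z w => by ext j; simp [Finset.sum_add_distrib]
        map_smul' := fun c z => by
          ext j; simp only [Pi.smul_apply, RingHom.id_apply, Finset.smul_sum]
          exact Finset.sum_congr rfl fun i _ => smul_comm _ _ _ }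
    let Φh : (Fin n → Z.M) →ₗ[K] E :=
      { toFun := fun z => Φ (fun i => h (z i))
        map_add' := fun z w => by rw [← map_add]; congr 1; ext i; simp
        map_smul' := fun c z => by
          rw [RingHom.id_apply, ← map_smul]; congr 1; ext i; exact hk c _ }
    have hker : ∀ z ∈ LinearMap.ker L, Φh z = 0 := by
      intro z hz
      have hz' : ∀ j, ∑ i, a j i • z i = 0 := fun j => congrFun hz j
      obtain ⟨u, hu⟩ := descend (Fintype.linearCombination R y) hπs
        (Fintype.linearCombination R z) (by
          intro r hr
          have : (⟨r, hr⟩ : S) ∈ Submodule.span R (Set.range a') := by rw [ha']; trivial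
          have key : Submodule.span R (Set.range a') ≤
              LinearMap.ker ((Fintype.linearCombination R z).comp S.subtype) := by
            rw [Submodule.span_le]
            rintro _ ⟨j, rfl⟩
            exact (Fintype.linearCombination_apply R z (a' j).1).trans (hz' j)
          exact key this)
      have hui : ∀ i, u (y i) = z i := by
        intro i
        have := LinearMap.congr_fun hu (Pi.single i 1)
        simpa using this
      have h3 : ξ (h.comp u) = 0 := by
        apply hξ
        intro hb
        obtain ⟨g, _, hg⟩ := inverse_of_bijective _ hb
        exact hh ⟨u.comp g, by rw [← LinearMap.comp_assoc]; exact hg⟩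
      rw [← hΦ] at h3
      have : (fun i => h (z i)) = ev (h.comp u) := by
        ext i; change _ = h (u (y i)); rw [hui]
      change Φ _ = 0
      rw [this]; exact h3
    obtain ⟨μ, hμ⟩ := hE.extend ((LinearMap.ker L).liftQ L le_rfl)
      (LinearMap.ker_eq_bot.1 (Submodule.ker_liftQ_eq_bot _ _ _ le_rfl))
      ((LinearMap.ker L).liftQ Φh hker)
    have hμ' : ∀ z, μ (L z) = Φh z := fun z => hμ (Submodule.Quotient.mk z)
    let ψ : Z.M →ₗ[R] D :=
      { toFun := fun z =>
          { toFun := fun v => μ (fun j => v j • z)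
            map_add' := fun v w => by rw [← map_add]; congr 1; ext j; simp [add_smul]
            map_smul' := fun c v => by
              rw [RingHom.id_apply, ← map_smul]; congr 1; ext j; simp }
        map_add' := fun z w => LinearMap.ext fun v => by
          change μ _ = μ _ + μ _
          rw [← map_add]; congr 1; ext j; simp
        map_smul' := fun s z => LinearMap.ext fun v => by
          change μ _ = μ _
          congr 1; ext j; simp [mul_smul] }
    refine ⟨LinearMap.codRestrict F (h.prod ψ) ?_, rfl⟩
    intro z r
    change Φ (fun i => r i • h z) = μ (fun j => (∑ i, a j i * r i) • z)
    have h1 : (fun i => r i • h z) = fun i => h (r i • z) := by ext i; simp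
    have h2 : (fun j => (∑ i, a j i * r i) • z) = L (fun i => r i • z) := by
      ext j
      change _ = ∑ i, a j i • (r i • z)
      rw [Finset.sum_smul]; simp only [mul_smul]
    rw [h1, h2, hμ']
    rfl

end
end ARExist


namespace ARExist
open ARMod ARDual

section
variable {K R : Type u} [CommRing K] [IsArtinianRing K] [Ring R] [Algebra K R] [Module.Finite K R]
  {E : Type u} [AddCommGroup E] [Module K E] (hE : IsCogen K E)
include hE

theorem exists_las (X : ModA R) (hX : X.IsIndec) :
    ∃ (F : ModA R) (f : X.M →ₗ[R] F.M), LAS f := by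
  let _i : Module K X.M := kmod K (R := R) X.M
  have : IsScalarTower K R X.M := IsScalarTower.of_algebraMap_smul fun _ _ => rfl
  have : IsNoetherian K R := inferInstance
  have : IsArtinian K R := inferInstance
  have : IsNoetherian R R := isNoetherian_of_tower K inferInstance
  have : IsArtinian R R := isArtinian_of_tower K inferInstance
  obtain ⟨ξ, hξ1, hξ⟩ := exists_xi (K := K) hE (M := X.M) hX
  have : Module.Finite K X.M := Module.Finite.trans R X.M
  have hXl : IsFiniteLength K X.M :=
    isFiniteLength_iff_isNoetherian_isArtinian.2 ⟨inferInstance, inferInstance⟩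
  have hDl : IsFiniteLength K (X.M →ₗ[K] E) := hE.dual_fin hXl
  have : IsNoetherian K (X.M →ₗ[K] E) := (isFiniteLength_iff_isNoetherian_isArtinian.1 hDl).1
  obtain ⟨n, χ, hχ⟩ := Module.Finite.exists_fin (R := K) (M := X.M →ₗ[K] E)
  let q : (Fin n → R) →ₗ[K] (X.M →ₗ[K] E) :=
    { toFun := fun r =>
        { toFun := fun x => ∑ i, χ i (r i • x)
          map_add' := fun x y => by simp [Finset.sum_add_distrib]
          map_smul' := fun c x => by
            rw [RingHom.id_apply, Finset.smul_sum]
            refine Finset.sum_congr rfl fun i _ => ?_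
            rw [← map_smul]; congr 1; exact smul_comm _ _ _ }
      map_add' := fun r s => LinearMap.ext fun x => by
        change ∑ i, χ i ((r i + s i) • x) = ∑ i, χ i (r i • x) + ∑ i, χ i (s i • x)
        simp [Finset.sum_add_distrib, add_smul]
      map_smul' := fun c r => LinearMap.ext fun x => by
        change ∑ i, χ i ((c • r i) • x) = c • ∑ i, χ i (r i • x)
        rw [Finset.smul_sum]
        refine Finset.sum_congr rfl fun i _ => ?_
        rw [← map_smul]; congr 1; exact smul_assoc _ _ _ }
  have q_apply : ∀ r x, q r x = ∑ i, χ i (r i • x) := fun _ _ => rfl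
  have q_single : ∀ i x, q (Pi.single i 1) x = χ i x := by
    intro i x
    rw [q_apply, Finset.sum_eq_single i]
    · simp
    · intro b _ hb; simp [hb]
    · intro h; exact absurd (Finset.mem_univ _) h
  have hq : Function.Surjective q := by
    rw [← LinearMap.range_eq_top, eq_top_iff, ← hχ, Submodule.span_le]
    rintro _ ⟨i, rfl⟩
    exact ⟨Pi.single i 1, LinearMap.ext (q_single i)⟩
  have sep : ∀ x y : X.M, (∀ r, q r x = q r y) → x = y := by
    intro x y h
    by_contra hxy
    obtain ⟨φ, hφ⟩ := hE.separates (x - y) (sub_ne_zero.2 hxy)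
    obtain ⟨r, rfl⟩ := hq φ
    apply hφ
    rw [map_sub, h r, sub_self]
  have sep' : ∀ x y : X.M, (∀ i, χ i x = χ i y) → x = y := by
    intro x y h
    by_contra hxy
    obtain ⟨φ, hφ⟩ := hE.separates (x - y) (sub_ne_zero.2 hxy)
    apply hφ
    have : Submodule.span K (Set.range χ) ≤
        LinearMap.ker (LinearMap.applyₗ (x - y) : (X.M →ₗ[K] E) →ₗ[K] E) := by
      rw [Submodule.span_le]
      rintro _ ⟨i, rfl⟩
      change χ i (x - y) = 0
      rw [map_sub, h, sub_self]
    rw [hχ] at this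
    exact this (x := φ) trivial
  -- the elements `φ i`
  let ev : Module.End R X.M →ₗ[K] (Fin n → (X.M →ₗ[K] E)) :=
    { toFun := fun u i => (χ i).comp (u.restrictScalars K)
      map_add' := fun u v => by
        ext i x; exact map_add (χ i) _ _
      map_smul' := fun c v => by
        ext i x; exact map_smul (χ i) _ _ }
  have hev : Function.Injective ev := by
    intro u v huv
    refine LinearMap.ext fun x => sep' _ _ fun i => ?_
    exact LinearMap.congr_fun (congrFun huv i) x
  obtain ⟨Ξ, hΞ⟩ := hE.extend ev hev ξ
  have hφ : ∀ i, ∃ x : X.M, ∀ f : X.M →ₗ[K] E, Ξ (Pi.single i f) = f x := fun i =>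
    hE.bidual hXl (Ξ.comp (LinearMap.single K (fun _ : Fin n => X.M →ₗ[K] E) i))
  choose φ hφ using hφ
  have hξφ : ∀ u : Module.End R X.M, ξ u = ∑ i, χ i (u (φ i)) := by
    intro u
    rw [← hΞ, ← Finset.univ_sum_single (ev u), map_sum]
    refine Finset.sum_congr rfl fun i _ => ?_
    rw [hφ]; rfl
  let S := LinearMap.ker q
  obtain ⟨m, a', ha'⟩ := Module.Finite.exists_fin (R := K) (M := S)
  let a : Fin m → Fin n → R := fun j => (a' j).1
  have haS : ∀ j x, ∑ i, χ i (a j i • x) = 0 := fun j x => by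
    have := LinearMap.congr_fun (LinearMap.mem_ker.1 (a' j).2) x
    exact this
  let t : (Fin n → R) →ₗ[R] (X.M × (Fin m → R)) :=
    { toFun := fun r => (∑ i, r i • φ i, fun j => -∑ i, r i * a j i)
      map_add' := fun r s => by
        ext j
        · simp [add_smul, Finset.sum_add_distrib]
        · simp [add_mul, Finset.sum_add_distrib]; abel
      map_smul' := fun c r => by
        ext j
        · simp [mul_smul, Finset.smul_sum]
        · simp [mul_assoc, Finset.mul_sum] }
  let N := LinearMap.range t
  refine ⟨mkA R ((X.M × (Fin m → R)) ⧸ N), N.mkQ.comp (LinearMap.inl R X.M (Fin m → R)), ?_, ?_⟩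
  · rintro ⟨ρ, hρ⟩
    apply hξ1
    let ρ' : (X.M × (Fin m → R)) →ₗ[R] X.M := ρ.comp N.mkQ
    have hN : ∀ r, ρ' (t r) = 0 := fun r => by
      have : N.mkQ (t r) = 0 := (Submodule.Quotient.mk_eq_zero N).2 ⟨r, rfl⟩
      change ρ (N.mkQ (t r)) = 0
      rw [this, map_zero]
    have hρ1 : ∀ x, ρ' (x, 0) = x := fun x => LinearMap.congr_fun hρ x
    let z : Fin m → X.M := fun j => ρ' (0, Pi.single j 1)
    have hz : ∀ i, φ i = ∑ j, a j i • z j := by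
      intro i
      have h1 := hN (Pi.single i 1)
      have h2 : t (Pi.single i 1) = (φ i, 0) - ∑ j, a j i • ((0 : X.M), (Pi.single j 1 : Fin m → R)) := by
        have e1 : ∑ i', (Pi.single i (1 : R) : Fin n → R) i' • φ i' = φ i := by
          rw [Finset.sum_eq_single i]
          · simp
          · intro b _ hb; simp [hb]
          · intro h; exact absurd (Finset.mem_univ _) h
        have e2 : ∀ j, ∑ i', (Pi.single i (1 : R) : Fin n → R) i' * a j i' = a j i := by
          intro j
          rw [Finset.sum_eq_single i]
          · simp
          · intro b _ hb; simp [hb]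
          · intro h; exact absurd (Finset.mem_univ _) h
        refine Prod.ext ?_ ?_
        · change ∑ i', (Pi.single i (1 : R) : Fin n → R) i' • φ i' = _
          rw [e1]; simp [Prod.fst_sum]
        · ext j
          change -∑ i', (Pi.single i (1 : R) : Fin n → R) i' * a j i' = _
          rw [e2, Prod.snd_sub, Prod.snd_sum, Pi.sub_apply, Finset.sum_apply, Finset.sum_eq_single j]
          · simp
          · intro b _ hb; simp [hb.symm]
          · intro h; exact absurd (Finset.mem_univ _) h
      rw [h2, map_sub, hρ1, map_sum, sub_eq_zero] at h1
      rw [h1]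
      exact Finset.sum_congr rfl fun j _ => map_smul ρ' _ _
    rw [hξφ]
    have : ∀ i, χ i ((1 : Module.End R X.M) (φ i)) = ∑ j, χ i (a j i • z j) := by
      intro i
      rw [← map_sum, ← hz]; rfl
    rw [Finset.sum_congr rfl fun i _ => this i, Finset.sum_comm]
    exact Finset.sum_eq_zero fun j _ => haS j _
  · intro Z h hh
    let _i : Module K Z.M := kmod K (R := R) Z.M
    have : IsScalarTower K R Z.M := IsScalarTower.of_algebraMap_smul fun _ _ => rfl
    let L : (Fin m → Z.M) →ₗ[K] (Fin n → Z.M) :=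
      { toFun := fun z i => ∑ j, a j i • z j
        map_add' := fun z w => by ext j; simp [Finset.sum_add_distrib]
        map_smul' := fun c z => by
          ext j; simp only [Pi.smul_apply, RingHom.id_apply, Finset.smul_sum]
          exact Finset.sum_congr rfl fun i _ => smul_comm _ _ _ }
    by_cases hmem : (fun i => h (φ i)) ∈ LinearMap.range L
    · obtain ⟨z, hz⟩ := hmem
      have hz' : ∀ i, ∑ j, a j i • z j = h (φ i) := fun i => congrFun hz i
      let w : (X.M × (Fin m → R)) →ₗ[R] Z.M :=
        LinearMap.coprod h (Fintype.linearCombination R z)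
      refine ⟨N.liftQ w ?_, ?_⟩
      · rintro _ ⟨r, rfl⟩
        rw [LinearMap.mem_ker]
        change h (∑ i, r i • φ i) + Fintype.linearCombination R z (fun j => -∑ i, r i * a j i) = 0
        rw [Fintype.linearCombination_apply, map_sum]
        simp only [map_smul, neg_smul, Finset.sum_neg_distrib, Finset.sum_smul, ← hz',
          Finset.smul_sum, mul_smul]
        rw [Finset.sum_comm, add_neg_cancel]
      · refine LinearMap.ext fun x => ?_
        change h x + Fintype.linearCombination R z 0 = h x
        rw [map_zero, add_zero]
    · exfalso
      obtain ⟨l, hl1, hl2⟩ := hE.separates_sub _ _ hmem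
      apply hl2
      have hu : ∀ z : Z.M, ∃ x : X.M, ∀ r : Fin n → R, l (fun i => r i • z) = q r x := by
        intro z
        let lz : (Fin n → R) →ₗ[K] E :=
          { toFun := fun r => l (fun i => r i • z)
            map_add' := fun r s => by rw [← map_add]; congr 1; ext i; simp [add_smul]
            map_smul' := fun c r => by
              rw [RingHom.id_apply, ← map_smul]; congr 1; ext i; simp }
        obtain ⟨F, hF⟩ := descend q hq lz (by
          intro r hr
          have : (⟨r, hr⟩ : S) ∈ Submodule.span K (Set.range a') := by rw [ha']; trivial
          have key : Submodule.span K (Set.range a') ≤ LinearMap.ker (lz.comp S.subtype) := by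
            rw [Submodule.span_le]
            rintro _ ⟨j, rfl⟩
            change l (fun i => a j i • z) = 0
            have : (fun i => a j i • z) = L (Pi.single j z) := by
              ext i
              change _ = ∑ j', a j' i • (Pi.single j z : Fin m → Z.M) j'
              rw [Finset.sum_eq_single j]
              · simp
              · intro b _ hb; simp [hb]
              · intro h; exact absurd (Finset.mem_univ _) h
            rw [this]
            exact hl1 _ ⟨_, rfl⟩
          exact key this)
        obtain ⟨x, hx⟩ := hE.bidual hXl F
        exact ⟨x, fun r => (LinearMap.congr_fun hF r).symm.trans (hx (q r))⟩
      choose u hu using hu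
      let U : Z.M →ₗ[R] X.M :=
        { toFun := u
          map_add' := fun z w => sep _ _ fun r => by
            rw [map_add, ← hu, ← hu, ← hu, ← map_add]
            congr 1; ext i; simp
          map_smul' := fun s z => sep _ _ fun r => by
            have : q r (s • u z) = q (fun i => r i * s) (u z) := by
              simp only [q_apply, mul_smul]
            rw [RingHom.id_apply, this, ← hu, ← hu]
            congr 1; ext i; simp [mul_smul] }
      have h3 : ξ (U.comp h) = 0 := by
        apply hξ
        intro hb
        obtain ⟨g, hg, _⟩ := inverse_of_bijective _ hb
        exact hh ⟨g.comp U, hg⟩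
      rw [hξφ] at h3
      rw [← h3]
      have e1 : (fun i => h (φ i)) = ∑ i, fun i' => (Pi.single i (1 : R) : Fin n → R) i' • h (φ i) := by
        ext i'
        rw [Finset.sum_apply, Finset.sum_eq_single i']
        · simp
        · intro b _ hb; simp [hb.symm]
        · intro h; exact absurd (Finset.mem_univ _) h
      rw [e1, map_sum]
      refine Finset.sum_congr rfl fun i _ => ?_
      rw [hu, q_single]
      rfl

end
end ARExist


namespace ARFinal
open ARMod ARDual ARExist Relation

variable {R : Type u} [Ring R]

theorem transGen_lift {X : IndecModA R} {y : ARVertex R} (h : TransGen ARArrow (ARVertex.mk X) y) :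
    ∀ Y : IndecModA R, ARVertex.mk Y = y → TransGen ARAbs.Arrow X Y := by
  induction h with
  | single h => rintro Y rfl; exact .single (arArrow_iff.1 h)
  | @tail b c _ h ih =>
    rintro Y rfl
    obtain ⟨B, rfl⟩ : ∃ B, ARVertex.mk B = b := Quotient.exists_rep b
    exact (ih B rfl).tail (arArrow_iff.1 h)

theorem reach_push {X Y : IndecModA R} (h : ARAbs.Reach X Y) :
    ReflTransGen ARArrow (ARVertex.mk X) (ARVertex.mk Y) := by
  induction h with
  | refl => exact .refl
  | tail _ h ih =>
    rcases h with h | h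
    · exact ih.tail (arArrow_iff.2 h)
    · rw [← iso_iff.1 h]; exact ih

theorem final
    (hR : ∀ Y : ModA R, Y.IsIndec → ∃ (E : ModA R) (e : E.M →ₗ[R] Y.M), RAS e)
    (hL : ∀ X : ModA R, X.IsIndec → ∃ (E : ModA R) (f : X.M →ₗ[R] E.M), LAS f)
    (x y : ARVertex R) :
    (∃ Γ : Set (ARVertex R), IsCyclicComponent Γ ∧ x ∈ Γ ∧ y ∈ Γ) ↔
      (ReflTransGen ARArrow x y ∧ TransGen ARArrow y x) := by
  have back : ∀ a b : ARVertex R, OnARCycle a → OnARCycle b → ARArrow a b →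
      ReflTransGen ARArrow b a := by
    intro a b ha hb hab
    obtain ⟨A, rfl⟩ : ∃ A, ARVertex.mk A = a := Quotient.exists_rep a
    obtain ⟨B, rfl⟩ : ∃ B, ARVertex.mk B = b := Quotient.exists_rep b
    exact reach_push (reach_back hR hL (arArrow_iff.1 hab) (transGen_lift ha A rfl)
      (transGen_lift hb B rfl))
  constructor
  · rintro ⟨Γ, ⟨hS, -, -, hc⟩, hx, hy⟩
    have hp := hc x hx y hy
    have key : ReflTransGen ARArrow x y ∧ ReflTransGen ARArrow y x := by
      clear hy
      induction hp with
      | refl => exact ⟨.refl, .refl⟩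
      | @tail b c _ h ih =>
        obtain ⟨hb, hc', h | h⟩ := h
        · exact ⟨ih.1.tail h, (back _ _ hb hc' h).trans ih.2⟩
        · exact ⟨ih.1.trans (back _ _ hc' hb h), ReflTransGen.head h ih.2⟩
    exact ⟨key.1, TransGen.trans_left (hS hy) key.2⟩
  · rintro ⟨hxy, hyx⟩
    let S : Set (ARVertex R) := {z | OnARCycle z}
    let r : ARVertex R → ARVertex R → Prop := fun a b => a ∈ S ∧ b ∈ S ∧ ARStep a b
    have hxS : x ∈ S := TransGen.trans_right hxy hyx
    have hsymm : ∀ a b, ReflTransGen r a b → ReflTransGen r b a := by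
      intro a b h
      induction h with
      | refl => exact .refl
      | tail _ h ih => exact ReflTransGen.head ⟨h.2.1, h.1, h.2.2.symm⟩ ih
    refine ⟨{z | ReflTransGen r x z}, ⟨?_, ⟨x, .refl⟩, ?_, ?_⟩, .refl, ?_⟩
    · intro z hz
      rcases ReflTransGen.cases_tail hz with rfl | ⟨c, _, hc⟩
      · exact hxS
      · exact hc.2.1
    · intro a ha b hb hab
      have haS : a ∈ S := by
        rcases ReflTransGen.cases_tail ha with rfl | ⟨c, _, hc⟩
        · exact hxS
        · exact hc.2.1
      exact ReflTransGen.tail ha ⟨haS, hb, hab⟩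
    · intro a ha b hb
      exact (hsymm _ _ ha).trans hb
    · change ReflTransGen r x y
      have : ∀ z, ReflTransGen ARArrow x z → ReflTransGen ARArrow z y → ReflTransGen r x z := by
        intro z hz
        induction hz with
        | refl => exact fun _ => .refl
        | @tail b c hb h ih =>
          intro hcy
          refine (ih (ReflTransGen.head h hcy)).tail ⟨?_, ?_, Or.inl h⟩
          · exact TransGen.trans_left (TransGen.trans_right ((ReflTransGen.head h hcy)) hyx) hb
          · exact TransGen.trans_left (TransGen.trans_right hcy hyx) (hb.tail h)
      exact this y hxy .refl

end ARFinal

/-- **Proposition (cyclic components).** Let `A` be a basic indecomposable artin algebra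
and `X`, `Y` modules in `ind A`. Then `X` and `Y` belong to the same connected component
of the cyclic quiver `_cΓ_A` iff there is an oriented cycle in `Γ_A` passing through both
`X` and `Y` (equivalently, oriented paths from `X` to `Y` and back). -/
theorem same_cyclic_component_iff_common_cycle
    (K A : Type u) [CommRing K] [IsArtinianRing K] [Ring A] [Algebra K A]
    [Module.Finite K A] (hbasic : IsBasicAlgebra A) (hconn : IsConnectedAlgebra A)
    (X Y : IndecModA Aᵐᵒᵖ) :
    (∃ Γ : Set (ARVertex Aᵐᵒᵖ), IsCyclicComponent Γ ∧
        ARVertex.mk X ∈ Γ ∧ ARVertex.mk Y ∈ Γ) ↔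
      (Relation.ReflTransGen ARArrow (ARVertex.mk X) (ARVertex.mk Y) ∧
        Relation.TransGen ARArrow (ARVertex.mk Y) (ARVertex.mk X)) := by
  obtain ⟨E, _, _, hE⟩ := ARDual.exists_cogen K
  have : Module.Finite K Aᵐᵒᵖ := Module.Finite.equiv (MulOpposite.opLinearEquiv K)
  exact ARFinal.final (fun Y hY => ARExist.exists_ras hE Y hY)
    (fun X hX => ARExist.exists_las hE X hX) (ARVertex.mk X) (ARVertex.mk Y)
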